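/- arXiv:2204.07785 — 3 statements merged into one kernel-verified Lean document; each statement's English description precedes it below -/
import Mathlib

section
/- There exists δ > 0 such that for all real u, w with |u|, |w| < δ, (1 + ∑_{k ≥ 2n, n ≥ 1} G_0(k,n,n) u^{k−2n} w^n) · (1 + ∑_{k ≥ 2n, n ≥ 1} (−1)^n G_0^*(k,n,n) u^{k−2n} w^n) = 1, both series converging absolutely. -/
open scoped BigOperators

/-- The multiple `t`-value of an index `K = (k₁, …, kₙ)` (a list of positive integers):
`t(K) = ∑_{m₁ > ⋯ > mₙ > 0, all mᵢ odd} 1 / (m₁^{k₁} ⋯ mₙ^{kₙ})`. -/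
noncomputable def multT (K : List ℕ) : ℝ :=
  ∑' m : Fin K.length → ℕ,
    if (∀ i, Odd (m i)) ∧ (∀ i j : Fin K.length, i < j → m j < m i) then
      ∏ i, ((m i : ℝ) ^ K.get i)⁻¹
    else 0

/-- The multiple `t`-star value of an index `K = (k₁, …, kₙ)`:
`t*(K) = ∑_{m₁ ≥ ⋯ ≥ mₙ > 0, all mᵢ odd} 1 / (m₁^{k₁} ⋯ mₙ^{kₙ})`. -/
noncomputable def multTStar (K : List ℕ) : ℝ :=
  ∑' m : Fin K.length → ℕ,
    if (∀ i, Odd (m i)) ∧ (∀ i j : Fin K.length, i < j → m j ≤ m i) then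
      ∏ i, ((m i : ℝ) ^ K.get i)⁻¹
    else 0

/-- An index (list of positive integers) is admissible if its first entry is `> 1`. -/
def Admissible (K : List ℕ) : Prop := (∀ i ∈ K, 1 ≤ i) ∧ 2 ≤ K.headI

instance : DecidablePred Admissible := fun K =>
  inferInstanceAs (Decidable ((∀ i ∈ K, 1 ≤ i) ∧ 2 ≤ K.headI))

/-- `G0h k n s` is the sum of multiple `t`-values over all admissible indices of
weight `k`, depth `n` and height `s`. -/
noncomputable def G0h (k n s : ℕ) : ℝ :=
  ∑' K : List ℕ,
    if Admissible K ∧ K.sum = k ∧ K.length = n ∧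
        K.countP (fun i => decide (2 ≤ i)) = s then
      multT K
    else 0

/-- `G0hStar k n s` is the sum of multiple `t`-star values over all admissible indices of
weight `k`, depth `n` and height `s`. -/
noncomputable def G0hStar (k n s : ℕ) : ℝ :=
  ∑' K : List ℕ,
    if Admissible K ∧ K.sum = k ∧ K.length = n ∧
        K.countP (fun i => decide (2 ≤ i)) = s then
      multTStar K
    else 0

/-- `G0d k n` is the sum of multiple `t`-values over all admissible indices of
weight `k` and depth `n`. -/
noncomputable def G0d (k n : ℕ) : ℝ :=
  ∑' K : List ℕ,
    if Admissible K ∧ K.sum = k ∧ K.length = n then multT K else 0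

/-- `G0dStar k n` is the sum of multiple `t`-star values over all admissible indices of
weight `k` and depth `n`. -/
noncomputable def G0dStar (k n : ℕ) : ℝ :=
  ∑' K : List ℕ,
    if Admissible K ∧ K.sum = k ∧ K.length = n then multTStar K else 0

/-- The single `t`-value `t(n) = ∑_{m odd, m > 0} 1 / m^n`. -/
noncomputable def tval (n : ℕ) : ℝ := ∑' m : ℕ, 1 / (2 * (m : ℝ) + 1) ^ n

/-- The ascending Pochhammer symbol `(a)ₙ = a (a+1) ⋯ (a+n-1)`. -/
noncomputable def poch (a : ℂ) (n : ℕ) : ℂ := ∏ i ∈ Finset.range n, (a + i)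

/-- The generalized hypergeometric function `₃F₂(a, b, c; d, e; z)`. -/
noncomputable def hyp3F2 (a b c d e z : ℂ) : ℂ :=
  ∑' n : ℕ, poch a n * poch b n * poch c n /
      ((n.factorial : ℂ) * poch d n * poch e n) * z ^ n

/-- The generalized hypergeometric function with upper parameters `as` and lower
parameters `bs`. -/
noncomputable def hypF (as bs : List ℂ) (z : ℂ) : ℂ :=
  ∑' n : ℕ, (as.map fun a => poch a n).prod /
      ((n.factorial : ℂ) * (bs.map fun b => poch b n).prod) * z ^ n

/-- The one-variable multiple polylogarithm
`L_K(z) = ∑_{m₁ > ⋯ > mₙ > 0, all mᵢ odd} z^{m₁} / (m₁^{k₁} ⋯ mₙ^{kₙ})`. -/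
noncomputable def Lt (K : List ℕ) (z : ℝ) : ℝ :=
  ∑' m : Fin K.length → ℕ,
    if h : (∀ i, Odd (m i)) ∧ (∀ i j : Fin K.length, i < j → m j < m i) ∧
        0 < K.length then
      z ^ (m ⟨0, h.2.2⟩) * ∏ i, ((m i : ℝ) ^ K.get i)⁻¹
    else 0

/-- The one-variable star multiple polylogarithm
`L*_K(z) = ∑_{m₁ ≥ ⋯ ≥ mₙ > 0, all mᵢ odd} z^{m₁} / (m₁^{k₁} ⋯ mₙ^{kₙ})`. -/
noncomputable def LtStar (K : List ℕ) (z : ℝ) : ℝ :=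
  ∑' m : Fin K.length → ℕ,
    if h : (∀ i, Odd (m i)) ∧ (∀ i j : Fin K.length, i < j → m j ≤ m i) ∧
        0 < K.length then
      z ^ (m ⟨0, h.2.2⟩) * ∏ i, ((m i : ℝ) ^ K.get i)⁻¹
    else 0

/-- `G0hz k n s z` is the sum of `L_K(z)` over all admissible indices `K` of
weight `k`, depth `n` and height `s`. -/
noncomputable def G0hz (k n s : ℕ) (z : ℝ) : ℝ :=
  ∑' K : List ℕ,
    if Admissible K ∧ K.sum = k ∧ K.length = n ∧
        K.countP (fun i => decide (2 ≤ i)) = s then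
      Lt K z
    else 0

/-- `G0hzStar k n s z` is the sum of `L*_K(z)` over all admissible indices `K` of
weight `k`, depth `n` and height `s`. -/
noncomputable def G0hzStar (k n s : ℕ) (z : ℝ) : ℝ :=
  ∑' K : List ℕ,
    if Admissible K ∧ K.sum = k ∧ K.length = n ∧
        K.countP (fun i => decide (2 ≤ i)) = s then
      LtStar K z
    else 0

open Classical in
noncomputable def phiL {α : Type*} (r : α → α → Prop) (z : α → ℝ) (l : List α) : ℝ :=
  if l.Pairwise r then (l.map z).prod else 0

theorem list_bound {α : Type*} (z : α → ℝ) (h0 : ∀ a, 0 ≤ z a) (hz : Summable z)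
    (h1 : ∑' a, z a < 1) (N : ℕ) : ∀ s : Finset (List α), (∀ l ∈ s, l.length ≤ N) →
    ∑ l ∈ s, (l.map z).prod ≤ 1 / (1 - ∑' a, z a) := by
  classical
  have hp : ∀ l : List α, 0 ≤ (l.map z).prod := by
    intro l
    apply List.prod_nonneg
    intro a ha
    obtain ⟨b, _, rfl⟩ := List.mem_map.1 ha
    exact h0 b
  have hZ : 0 ≤ ∑' a, z a := tsum_nonneg h0
  set Z := ∑' a, z a with hZdef
  have hpos : 0 < 1 - Z := by linarith
  induction N with
  | zero =>
    intro s hs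
    have : s ⊆ {[]} := by
      intro l hl
      have := hs l hl
      simpa using this
    calc ∑ l ∈ s, (l.map z).prod ≤ ∑ l ∈ ({[]} : Finset (List α)), (l.map z).prod :=
          Finset.sum_le_sum_of_subset_of_nonneg this (fun l _ _ => hp l)
      _ = 1 := by simp
      _ ≤ _ := by rw [le_div_iff₀ hpos]; linarith
  | succ N ih =>
    intro s hs
    let T : Finset (List α) := s.image List.tail
    let H : Finset α := s.biUnion (fun l => l.toFinset)
    have hT : ∀ l ∈ T, l.length ≤ N := by
      intro l hl
      obtain ⟨l', hl', rfl⟩ := Finset.mem_image.1 hl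
      have := hs l' hl'
      simp; omega
    have hsub : s ⊆ {[]} ∪ (H ×ˢ T).image (fun p => p.1 :: p.2) := by
      intro l hl
      cases l with
      | nil => simp
      | cons a l =>
        apply Finset.mem_union_right
        refine Finset.mem_image.2 ⟨(a, l), ?_, rfl⟩
        refine Finset.mem_product.2 ⟨?_, ?_⟩
        · exact Finset.mem_biUnion.2 ⟨a :: l, hl, by simp⟩
        · exact Finset.mem_image.2 ⟨a :: l, hl, rfl⟩
    have hT' := ih T hT
    have hH : ∑ a ∈ H, z a ≤ Z := hz.sum_le_tsum H (fun a _ => h0 a)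
    calc ∑ l ∈ s, (l.map z).prod
        ≤ ∑ l ∈ {[]} ∪ (H ×ˢ T).image (fun p => p.1 :: p.2), (l.map z).prod :=
          Finset.sum_le_sum_of_subset_of_nonneg hsub (fun l _ _ => hp l)
      _ = 1 + ∑ l ∈ (H ×ˢ T).image (fun p => p.1 :: p.2), (l.map z).prod := by
          rw [Finset.sum_union]
          · simp
          · simp
      _ = 1 + (∑ a ∈ H, z a) * ∑ l ∈ T, (l.map z).prod := by
          rw [Finset.sum_image]
          · rw [Finset.sum_mul_sum, ← Finset.sum_product']
            simp
          · rintro ⟨a, l⟩ _ ⟨b, l'⟩ _ h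
            simpa using h
      _ ≤ 1 + Z * (1 / (1 - Z)) := by
          gcongr
          exact Finset.sum_nonneg (fun l _ => hp l)
      _ = 1 / (1 - Z) := by field_simp; ring

theorem list_summable {α : Type*} (z : α → ℝ) (hz : Summable (fun a => |z a|))
    (h1 : ∑' a, |z a| < 1) : Summable (fun l : List α => |(l.map z).prod|) := by
  have e : ∀ l : List α, |(l.map z).prod| = (l.map (fun a => |z a|)).prod := by
    intro l
    induction l with
    | nil => simp
    | cons a l ih => simp [abs_mul, ih]
  simp_rw [e]
  refine summable_of_sum_le (c := 1 / (1 - ∑' a, |z a|)) ?_ ?_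
  · intro l; show (0 : ℝ) ≤ (l.map (fun a => |z a|)).prod; rw [← e]; positivity
  · intro s
    exact list_bound _ (fun a => abs_nonneg _) hz h1 (s.sup List.length) s
      (fun l hl => Finset.le_sup (f := List.length) hl)

theorem phiL_summable {α : Type*} (r : α → α → Prop) (z : α → ℝ)
    (hz : Summable (fun a => |z a|)) (h1 : ∑' a, |z a| < 1) :
    Summable (fun l : List α => ‖phiL r z l‖) := by
  refine (list_summable z hz h1).of_nonneg_of_le (fun l => norm_nonneg _) ?_
  intro l
  unfold phiL
  split_ifs <;> simp

open Classical in
noncomputable def cT {α : Type*} (f : α → ℕ) (z : α → ℝ) (q : α × List α × List α) : ℝ :=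
  if (q.1 :: q.2.1).Pairwise (fun a b => f b < f a) ∧
    (q.1 :: q.2.2).Pairwise (fun a b => f b ≤ f a) then
    z q.1 * (q.2.1.map z).prod * (q.2.2.map (fun a => - z a)).prod else 0

noncomputable def gOne {α : Type*} (f : α → ℕ) (z : α → ℝ) : List α × List α → ℝ
  | ([], _) => 0
  | (a :: l, l') => cT f z (a, l, l')

noncomputable def gTwo {α : Type*} (f : α → ℕ) (z : α → ℝ) : List α × List α → ℝ
  | (_, []) => 0
  | (l, a :: l') => - cT f z (a, l, l')

noncomputable def gZero {α : Type*} : List α × List α → ℝ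
  | ([], []) => 1
  | _ => 0

theorem pointwise_split {α : Type*} (f : α → ℕ) (z : α → ℝ) (p : List α × List α) :
    phiL (fun a b => f b < f a) z p.1 * phiL (fun a b => f b ≤ f a) (fun a => - z a) p.2
      = gZero p + (gOne f z p + gTwo f z p) := by
  classical
  obtain ⟨l, l'⟩ := p
  cases l with
  | nil =>
    cases l' with
    | nil => simp [phiL, gZero, gOne, gTwo]
    | cons b l' =>
      simp only [phiL, gZero, gOne, gTwo, cT]
      simp
      split_ifs <;> simp
  | cons a l =>
    cases l' with
    | nil =>
      simp only [phiL, gZero, gOne, gTwo, cT]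
      simp
    | cons b l' =>
      simp only [phiL, gZero, gOne, gTwo, cT]
      by_cases hP : (a :: l).Pairwise (fun a b => f b < f a)
      · by_cases hQ : (b :: l').Pairwise (fun a b => f b ≤ f a)
        · rcases le_or_gt (f b) (f a) with h | h
          · have h1 : (a :: b :: l').Pairwise (fun a b => f b ≤ f a) := by
              rw [List.pairwise_cons]
              refine ⟨?_, hQ⟩
              intro c hc
              rcases List.mem_cons.1 hc with rfl | hc
              · exact h
              · exact ((List.pairwise_cons.1 hQ).1 c hc).trans h
            have h2 : ¬ (b :: a :: l).Pairwise (fun a b => f b < f a) := by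
              intro h2
              have := (List.pairwise_cons.1 h2).1 a (by simp)
              omega
            rw [if_pos hP, if_pos hQ, if_pos ⟨hP, h1⟩, if_neg (fun h => h2 h.1)]
            simp
          · have h1 : ¬ (a :: b :: l').Pairwise (fun a b => f b ≤ f a) := by
              intro h2
              have := (List.pairwise_cons.1 h2).1 b (by simp)
              omega
            have h2 : (b :: a :: l).Pairwise (fun a b => f b < f a) := by
              rw [List.pairwise_cons]
              refine ⟨?_, hP⟩
              intro c hc
              rcases List.mem_cons.1 hc with rfl | hc
              · exact h
              · exact ((List.pairwise_cons.1 hP).1 c hc).trans h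
            rw [if_pos hP, if_pos hQ, if_neg (fun h => h1 h.2), if_pos ⟨h2, hQ⟩]
            simp
            ring
        · have n1 : ¬ ((a :: l).Pairwise (fun a b => f b < f a) ∧
              (a :: b :: l').Pairwise (fun a b => f b ≤ f a)) :=
            fun h => hQ (List.pairwise_cons.1 h.2).2
          have n2 : ¬ ((b :: a :: l).Pairwise (fun a b => f b < f a) ∧
              (b :: l').Pairwise (fun a b => f b ≤ f a)) := fun h => hQ h.2
          rw [if_neg hQ, if_neg n1, if_neg n2]
          simp
      · have n1 : ¬ ((a :: l).Pairwise (fun a b => f b < f a) ∧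
            (a :: b :: l').Pairwise (fun a b => f b ≤ f a)) := fun h => hP h.1
        have n2 : ¬ ((b :: a :: l).Pairwise (fun a b => f b < f a) ∧
            (b :: l').Pairwise (fun a b => f b ≤ f a)) :=
          fun h => hP (List.pairwise_cons.1 h.1).2
        rw [if_neg hP, if_neg n1, if_neg n2]
        simp

theorem inv_lemma {α : Type*} (f : α → ℕ) (z : α → ℝ)
    (hz : Summable (fun a => |z a|)) (h1 : ∑' a, |z a| < 1) :
    (∑' l, phiL (fun a b => f b < f a) z l) *
      (∑' l, phiL (fun a b => f b ≤ f a) (fun a => - z a) l) = 1 := by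
  have hz' : Summable (fun a => |(- z a)|) := by simpa using hz
  have h1' : ∑' a, |(- z a)| < 1 := by simpa using h1
  rw [tsum_mul_tsum_of_summable_norm (phiL_summable _ z hz h1) (phiL_summable _ _ hz' h1')]
  simp_rw [pointwise_split]
  have hS : Summable (fun p : List α × List α =>
      |(p.1.map z).prod| * |(p.2.map (fun a => - z a)).prod|) :=
    (list_summable z hz h1).mul_of_nonneg (list_summable _ hz' h1')
      (fun _ => abs_nonneg _) (fun _ => abs_nonneg _)
  have hS1 : Summable (gOne f z) := by
    apply Summable.of_norm_bounded hS
    rintro ⟨l, l'⟩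
    cases l with
    | nil => simp [gOne]
    | cons a l =>
      simp only [gOne, cT]
      split_ifs
      · simp [abs_mul]
      · simp; positivity
  have hS2 : Summable (gTwo f z) := by
    apply Summable.of_norm_bounded hS
    rintro ⟨l, l'⟩
    cases l' with
    | nil => simp [gTwo]
    | cons a l' =>
      simp only [gTwo, cT]
      split_ifs
      · simp [abs_mul]
        apply le_of_eq; ring
      · simp; positivity
  have hS0 : HasSum (gZero (α := α)) 1 := by
    have := hasSum_single (f := gZero (α := α)) ([], []) (by
      rintro ⟨l, l'⟩ h
      cases l <;> cases l' <;> simp_all [gZero])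
    simpa [gZero] using this
  rw [hS0.summable.tsum_add (hS1.add hS2), hS1.tsum_add hS2, hS0.tsum_eq]
  have e1 : ∑' p, gOne f z p = ∑' q, cT f z q := by
    have hi : Function.Injective
        (fun q : α × List α × List α => ((q.1 :: q.2.1, q.2.2) : List α × List α)) := by
      rintro ⟨a, l, l'⟩ ⟨b, m, m'⟩ h
      simp at h ⊢; tauto
    rw [← hi.tsum_eq (f := gOne f z)]
    · rfl
    · rintro ⟨l, l'⟩ h
      cases l with
      | nil => simp [gOne] at h
      | cons a l => exact ⟨(a, l, l'), rfl⟩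
  have e2 : ∑' p, gTwo f z p = - ∑' q, cT f z q := by
    have hi : Function.Injective
        (fun q : α × List α × List α => ((q.2.1, q.1 :: q.2.2) : List α × List α)) := by
      rintro ⟨a, l, l'⟩ ⟨b, m, m'⟩ h
      simp at h ⊢; tauto
    rw [← hi.tsum_eq (f := gTwo f z), ← tsum_neg]
    · apply tsum_congr
      rintro ⟨a, l, l'⟩
      cases l <;> rfl
    · rintro ⟨l, l'⟩ h
      cases l' with
      | nil => cases l <;> simp [gTwo] at h
      | cons a l' => exact ⟨(a, l, l'), rfl⟩
  rw [e1, e2]; ring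

noncomputable def cW (u w : ℝ) (k : ℕ) : ℝ := if 2 ≤ k then w * u ^ (k - 2) else 0

open Classical in
noncomputable def zW (u w : ℝ) (a : ℕ × ℕ) : ℝ :=
  (if Odd a.1 then ((a.1 : ℝ) ^ a.2)⁻¹ else 0) * cW u w a.2

open Classical in
noncomputable def mtR (R : ℕ → ℕ → Prop) (K : List ℕ) : ℝ :=
  ∑' m : Fin K.length → ℕ,
    if (∀ i, Odd (m i)) ∧ (∀ i j : Fin K.length, i < j → R (m j) (m i)) then
      ∏ i, ((m i : ℝ) ^ K.get i)⁻¹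
    else 0

theorem fiber_K (R : ℕ → ℕ → Prop) (u w : ℝ) (K : List ℕ) :
    ∑' l : ((fun l : List (ℕ × ℕ) => l.map Prod.snd) ⁻¹' {K} : Set _),
      phiL (fun a b => R b.1 a.1) (zW u w) l = mtR R K * (K.map (cW u w)).prod := by
  classical
  let e : (Fin K.length → ℕ) → ((fun l : List (ℕ × ℕ) => l.map Prod.snd) ⁻¹' {K} : Set _) :=
    fun m => ⟨List.ofFn (fun i => (m i, K.get i)), by
      simp [List.map_ofFn, Function.comp_def]⟩
  have he : Function.Bijective e := by
    constructor
    · intro m m' h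
      have h' := congrArg Subtype.val h
      have := List.ofFn_injective h'
      funext i
      exact congrArg Prod.fst (congrFun this i)
    · rintro ⟨l, hl⟩
      have hl' : l.map Prod.snd = K := hl
      subst hl'
      refine ⟨fun i => (l.get (Fin.cast (by simp) i)).1, ?_⟩
      apply Subtype.ext
      apply List.ext_get
      · simp [e]
      · intro n h1 h2
        simp [e]
  rw [← (Equiv.ofBijective e he).tsum_eq, mtR, ← tsum_mul_right]
  apply tsum_congr
  intro m
  have hprod : (K.map (cW u w)).prod = ∏ i, cW u w (K.get i) := by
    rw [← List.prod_ofFn]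
    congr 1
    apply List.ext_get <;> simp
  simp only [Equiv.ofBijective_apply, e, phiL, List.pairwise_ofFn, List.map_ofFn, List.prod_ofFn,
    hprod]
  by_cases hR : ∀ i j : Fin K.length, i < j → R (m j) (m i)
  · rw [if_pos (by intro i j h; exact hR i j h)]
    by_cases ho : ∀ i, Odd (m i)
    · rw [if_pos ⟨ho, hR⟩, ← Finset.prod_mul_distrib]
      apply Finset.prod_congr rfl
      intro i _
      simp [zW, ho i]
    · rw [if_neg (fun h => ho h.1), zero_mul]
      push Not at ho
      obtain ⟨i, hi⟩ := ho
      apply Finset.prod_eq_zero (Finset.mem_univ i)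
      simp only [Function.comp, zW]
      rw [if_neg (by simpa using hi), zero_mul]
  · rw [if_neg (fun h => hR (fun i j hij => h hij)), if_neg (fun h => hR h.2), zero_mul]

theorem prod_cW (u w : ℝ) (K : List ℕ) : (∀ k ∈ K, 2 ≤ k) →
    2 * K.length ≤ K.sum ∧
    (K.map (cW u w)).prod = u ^ (K.sum - 2 * K.length) * w ^ K.length := by
  induction K with
  | nil => simp
  | cons k K ih =>
    intro h
    have hk := h k (by simp)
    obtain ⟨h1, h2⟩ := ih (fun x hx => h x (by simp [hx]))
    simp only [List.length_cons, List.sum_cons, List.map_cons, List.prod_cons]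
    refine ⟨by omega, ?_⟩
    have : k + K.sum - 2 * (K.length + 1) = (k - 2) + (K.sum - 2 * K.length) := by omega
    rw [h2, cW, if_pos hk, this, pow_add, pow_succ]
    ring

theorem prod_cW_zero (u w : ℝ) (K : List ℕ) (h : ¬ ∀ k ∈ K, 2 ≤ k) :
    (K.map (cW u w)).prod = 0 := by
  push Not at h
  obtain ⟨k, hk, hk2⟩ := h
  apply List.prod_eq_zero
  refine List.mem_map.2 ⟨k, hk, ?_⟩
  rw [cW, if_neg (by omega)]

theorem cond_iff (K : List ℕ) (k n : ℕ) :
    (Admissible K ∧ K.sum = k ∧ K.length = n + 1 ∧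
        K.countP (fun i => decide (2 ≤ i)) = n + 1) ↔
      ((∀ i ∈ K, 2 ≤ i) ∧ K.sum = k ∧ K.length = n + 1) := by
  constructor
  · rintro ⟨_, h1, h2, h3⟩
    refine ⟨?_, h1, h2⟩
    have := List.countP_eq_length.1 (h3.trans h2.symm)
    simpa using this
  · rintro ⟨h, h1, h2⟩
    refine ⟨⟨fun i hi => by have := h i hi; omega, ?_⟩, h1, h2, ?_⟩
    · cases K with
      | nil => simp at h2
      | cons a K => exact h a (by simp)
    · rw [← h2]
      apply List.countP_eq_length.2
      simpa using h

open Classical in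
noncomputable def gR (R : ℕ → ℕ → Prop) (k n s : ℕ) : ℝ :=
  ∑' K : List ℕ,
    if Admissible K ∧ K.sum = k ∧ K.length = n ∧
        K.countP (fun i => decide (2 ≤ i)) = s then
      mtR R K
    else 0

theorem gen_hasSum (R : ℕ → ℕ → Prop) (u w : ℝ)
    (hz : Summable (fun a => |zW u w a|)) (h1 : ∑' a, |zW u w a| < 1) :
    HasSum (fun p : ℕ × ℕ =>
      gR R (p.1 + 2 * p.2 + 2) (p.2 + 1) (p.2 + 1) * u ^ p.1 * w ^ (p.2 + 1))
      ((∑' l, phiL (fun a b => R b.1 a.1) (zW u w) l) - 1) := by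
  classical
  have hs : Summable (phiL (fun a b => R b.1 a.1) (zW u w)) :=
    (phiL_summable _ _ hz h1).of_norm
  have hK := hs.hasSum.tsum_fiberwise (fun l : List (ℕ × ℕ) => l.map Prod.snd)
  simp_rw [fiber_K] at hK
  have hK0 : HasSum (fun K : List ℕ => if K = [] then (1 : ℝ) else 0) 1 := hasSum_ite_eq [] 1
  have hK' := hK.sub hK0
  have hG := hK'.tsum_fiberwise (fun K : List ℕ => (K.sum - 2 * K.length, K.length - 1))
  suffices hh : (fun p : ℕ × ℕ =>
      gR R (p.1 + 2 * p.2 + 2) (p.2 + 1) (p.2 + 1) * u ^ p.1 * w ^ (p.2 + 1)) = _ by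
    rw [hh]; exact hG
  funext p
  obtain ⟨s, n⟩ := p
  rw [tsum_subtype ((fun K : List ℕ => (K.sum - 2 * K.length, K.length - 1)) ⁻¹' {(s, n)})
    (fun K : List ℕ => mtR R K * (K.map (cW u w)).prod - if K = [] then (1 : ℝ) else 0)]
  simp only [gR]
  rw [← tsum_mul_right, ← tsum_mul_right]
  apply tsum_congr
  intro K
  simp only [cond_iff, Set.indicator_apply, Set.mem_preimage, Set.mem_singleton_iff,
    Prod.mk.injEq]
  by_cases hnil : K = []
  · subst hnil
    have : mtR R [] = 1 := by
      simp [mtR]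
    simp [this]
  have hpos : 0 < K.length := List.length_pos_iff.2 hnil
  by_cases h2 : ∀ i ∈ K, 2 ≤ i
  · obtain ⟨ha, hb⟩ := prod_cW u w K h2
    by_cases hc : K.sum - 2 * K.length = s ∧ K.length - 1 = n
    · have hl : K.length = n + 1 := by omega
      rw [if_pos ⟨h2, by omega, hl⟩, if_pos hc, hb, if_neg hnil, hc.1, hl]
      ring
    · rw [if_neg hc, if_neg (fun h => hc (by omega))]
      simp
  · rw [if_neg (fun h => h2 h.1), prod_cW_zero u w K h2, if_neg hnil]
    simp

theorem zW_bound (u w : ℝ) (hu : |u| ≤ 1 / 2) (a : ℕ × ℕ) :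
    |zW u w a| ≤ |w| * ((1 / (a.1 : ℝ) ^ 2) * (4 * (1 / 2 : ℝ) ^ a.2)) := by
  obtain ⟨m, k⟩ := a
  simp only [zW, cW]
  split_ifs with ho hk
  · obtain ⟨j, rfl⟩ : ∃ j, k = j + 2 := ⟨k - 2, by omega⟩
    have hm : (1 : ℝ) ≤ m := by exact_mod_cast ho.pos
    have e : (4 * (1 / 2 : ℝ) ^ (j + 2)) = (1 / 2) ^ j := by ring
    rw [e, Nat.add_sub_cancel, abs_mul, abs_mul, abs_pow, abs_of_pos (by positivity)]
    have h3 : ((m : ℝ) ^ (j + 2))⁻¹ ≤ 1 / (m : ℝ) ^ 2 := by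
      rw [one_div]
      apply inv_anti₀ (by positivity)
      exact pow_le_pow_right₀ hm (by omega)
    have h4 : |u| ^ j ≤ (1 / 2) ^ j := by gcongr
    calc ((m : ℝ) ^ (j + 2))⁻¹ * (|w| * |u| ^ j) ≤ 1 / (m : ℝ) ^ 2 * (|w| * (1 / 2) ^ j) := by
          gcongr
      _ = _ := by ring
  · simp; positivity
  · simp; positivity
  · simp; positivity

theorem zW_exists : ∃ δ > (0 : ℝ), ∀ u w : ℝ, |u| < δ → |w| < δ →
    Summable (fun a => |zW u w a|) ∧ ∑' a, |zW u w a| < 1 := by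
  have hb : Summable (fun a : ℕ × ℕ => (1 / (a.1 : ℝ) ^ 2) * (4 * (1 / 2 : ℝ) ^ a.2)) := by
    apply Summable.mul_of_nonneg (f := fun m : ℕ => 1 / (m : ℝ) ^ 2)
      (g := fun k : ℕ => 4 * (1 / 2 : ℝ) ^ k)
    · exact Real.summable_one_div_nat_pow.2 (by norm_num)
    · exact summable_geometric_two.mul_left 4
    · intro m; simp only [Pi.zero_apply]; positivity
    · intro m; simp only [Pi.zero_apply]; positivity
  set S := ∑' a : ℕ × ℕ, (1 / (a.1 : ℝ) ^ 2) * (4 * (1 / 2 : ℝ) ^ a.2) with hS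
  have hS0 : 0 ≤ S := tsum_nonneg (fun a => by positivity)
  refine ⟨min (1 / 2) (1 / (S + 1)), by positivity, ?_⟩
  intro u w hu hw
  have hu' : |u| ≤ 1 / 2 := (hu.trans_le (min_le_left _ _)).le
  have hw' : |w| < 1 / (S + 1) := hw.trans_le (min_le_right _ _)
  have hsum : Summable (fun a => |zW u w a|) :=
    (hb.mul_left |w|).of_nonneg_of_le (fun _ => abs_nonneg _) (zW_bound u w hu')
  refine ⟨hsum, ?_⟩
  have h1 : ∑' a, |zW u w a| ≤ |w| * S := by
    rw [hS, ← tsum_mul_left]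
    exact hsum.tsum_le_tsum (zW_bound u w hu') (hb.mul_left |w|)
  rw [lt_div_iff₀ (by linarith)] at hw'
  nlinarith [abs_nonneg w]

theorem gR_lt (k n s : ℕ) : gR (fun a b => a < b) k n s = G0h k n s := by
  unfold gR G0h mtR multT
  refine tsum_congr fun K => ?_
  congr 1
  refine tsum_congr fun m => ?_
  congr 1

theorem gR_le (k n s : ℕ) : gR (fun a b => a ≤ b) k n s = G0hStar k n s := by
  unfold gR G0hStar mtR multTStar
  refine tsum_congr fun K => ?_
  congr 1
  refine tsum_congr fun m => ?_
  congr 1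

/-- The generating functions of maximal-height sums of multiple `t`-values and of
multiple `t`-star values (with alternating signs) are multiplicative inverses. -/
theorem maximal_height_product_eq_one :
    ∃ δ > (0 : ℝ), ∀ u w : ℝ, |u| < δ → |w| < δ →
      Summable (fun p : ℕ × ℕ =>
        G0h (p.1 + 2 * p.2 + 2) (p.2 + 1) (p.2 + 1) * u ^ p.1 * w ^ (p.2 + 1)) ∧
      Summable (fun p : ℕ × ℕ =>
        (-1 : ℝ) ^ (p.2 + 1) * G0hStar (p.1 + 2 * p.2 + 2) (p.2 + 1) (p.2 + 1)
          * u ^ p.1 * w ^ (p.2 + 1)) ∧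
      (1 + (∑' p : ℕ × ℕ,
            G0h (p.1 + 2 * p.2 + 2) (p.2 + 1) (p.2 + 1) * u ^ p.1 * w ^ (p.2 + 1))) *
        (1 + ∑' p : ℕ × ℕ,
          (-1 : ℝ) ^ (p.2 + 1) * G0hStar (p.1 + 2 * p.2 + 2) (p.2 + 1) (p.2 + 1)
            * u ^ p.1 * w ^ (p.2 + 1)) = 1 := by
  obtain ⟨δ, hδ, H⟩ := zW_exists
  refine ⟨δ, hδ, ?_⟩
  intro u w hu hw
  obtain ⟨hz, h1⟩ := H u w hu hw
  obtain ⟨hz', h1'⟩ := H u (-w) hu (by simpa using hw)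
  have A := gen_hasSum (fun a b => a < b) u w hz h1
  have B := gen_hasSum (fun a b => a ≤ b) u (-w) hz' h1'
  simp only [gR_lt] at A
  simp only [gR_le] at B
  have hneg : zW u (-w) = fun a => - zW u w a := by
    funext a
    simp only [zW, cW]
    split_ifs <;> ring
  have eB : (fun p : ℕ × ℕ =>
      G0hStar (p.1 + 2 * p.2 + 2) (p.2 + 1) (p.2 + 1) * u ^ p.1 * (-w) ^ (p.2 + 1)) =
      (fun p : ℕ × ℕ =>
        (-1 : ℝ) ^ (p.2 + 1) * G0hStar (p.1 + 2 * p.2 + 2) (p.2 + 1) (p.2 + 1)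
          * u ^ p.1 * w ^ (p.2 + 1)) := by
    funext p
    rw [neg_pow w]
    ring
  rw [eB] at B
  refine ⟨A.summable, B.summable, ?_⟩
  rw [A.tsum_eq, B.tsum_eq, hneg]
  have := inv_lemma (fun a : ℕ × ℕ => a.1) (zW u w) hz h1
  rw [add_sub_cancel, add_sub_cancel]
  exact this
end

section
/- For all real w with |w| < 1, 1 + ∑_{n ≥ 1} t^*({2}^n) w^n = exp( ∑_{n ≥ 1} (1/n) t(2n) w^n ), both series converging absolutely; here t^*({2}^n) is the multiple t-star value of the index consisting of the entry 2 repeated n times. -/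
open scoped BigOperators

noncomputable def ta (i : ℕ) : ℝ := 1 / (2 * (i : ℝ) + 1) ^ 2

noncomputable def tR : ℕ → ℕ → ℝ
  | 0, _ => 1
  | n + 1, M => ∑ k ∈ Finset.range (M + 1), ta k * tR n k

lemma ta_nonneg (i : ℕ) : 0 ≤ ta i := by unfold ta; positivity

lemma ta_le (i : ℕ) : ta i ≤ 1 / ((i : ℝ) + 1) ^ 2 := by
  unfold ta
  apply one_div_le_one_div_of_le (by positivity)
  have : (0 : ℝ) ≤ i := Nat.cast_nonneg i
  gcongr
  linarith

lemma ta_le_one (i : ℕ) : ta i ≤ 1 := by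
  refine (ta_le i).trans ?_
  have : (0 : ℝ) ≤ i := Nat.cast_nonneg i
  rw [div_le_one (by positivity)]
  nlinarith

lemma ta_summable : Summable ta := by
  have h : Summable (fun i : ℕ => 1 / ((i : ℝ) + 1) ^ 2) := by
    have := (summable_nat_add_iff 1).2 (Real.summable_one_div_nat_pow.2 (one_lt_two))
    simpa using this
  exact Summable.of_nonneg_of_le ta_nonneg ta_le h

lemma tR_nonneg (n M : ℕ) : 0 ≤ tR n M := by
  induction n generalizing M with
  | zero => simp [tR]
  | succ n ih =>
    rw [tR]
    exact Finset.sum_nonneg fun k _ => mul_nonneg (ta_nonneg k) (ih k)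

lemma tR_succ (n M : ℕ) : tR (n + 1) (M + 1) = tR (n + 1) M + ta (M + 1) * tR n (M + 1) := by
  rw [tR, tR, Finset.sum_range_succ]

lemma tR_zero (n : ℕ) : tR n 0 = 1 := by
  induction n with
  | zero => simp [tR]
  | succ n ih => simp [tR, ih, ta]

lemma tR_le (M n : ℕ) : tR n M ≤ 2 * ((M : ℝ) + 1) / (M + 2) := by
  induction M generalizing n with
  | zero => simp [tR_zero]
  | succ M ihM =>
    have hM : (0 : ℝ) ≤ M := Nat.cast_nonneg M
    induction n with
    | zero =>
      simp only [tR]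
      push_cast
      rw [le_div_iff₀ (by positivity)]
      linarith
    | succ n ih =>
      rw [tR_succ]
      have h1 := ihM (n + 1)
      have h2 : ta (M + 1) * tR n (M + 1) ≤ 1 / (((M + 1 : ℕ) : ℝ) + 1) ^ 2 *
          (2 * (((M + 1 : ℕ) : ℝ) + 1) / (((M + 1 : ℕ) : ℝ) + 2)) :=
        mul_le_mul (ta_le _) ih (tR_nonneg _ _) (by positivity)
      refine (add_le_add h1 h2).trans (le_of_eq ?_)
      push_cast
      field_simp
      ring

lemma tR_le_two (n M : ℕ) : tR n M ≤ 2 := by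
  refine (tR_le M n).trans ?_
  rw [div_le_iff₀ (by positivity)]
  linarith

lemma tR_gen_summable (w : ℝ) (hw : |w| < 1) (M : ℕ) : Summable fun n => tR n M * w ^ n := by
  refine Summable.of_norm_bounded ((summable_geometric_of_lt_one (abs_nonneg w) hw).mul_left 2) ?_
  intro n
  rw [norm_mul, norm_pow, Real.norm_eq_abs, Real.norm_eq_abs, abs_of_nonneg (tR_nonneg _ _)]
  exact mul_le_mul_of_nonneg_right (tR_le_two _ _) (by positivity)

lemma abs_taw (w : ℝ) (hw : |w| < 1) (k : ℕ) : |ta k * w| < 1 := by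
  rw [abs_mul, abs_of_nonneg (ta_nonneg k)]
  exact (mul_le_of_le_one_left (abs_nonneg w) (ta_le_one k)).trans_lt hw

lemma tR_gen (w : ℝ) (hw : |w| < 1) (M : ℕ) :
    ∑' n, tR n M * w ^ n = ∏ k ∈ Finset.range (M + 1), (1 - ta k * w)⁻¹ := by
  induction M with
  | zero =>
    simp only [tR_zero, one_mul]
    rw [tsum_geometric_of_abs_lt_one hw]
    simp [ta]
  | succ M ih =>
    rw [Finset.prod_range_succ, ← ih]
    have h1 := (tR_gen_summable w hw (M + 1)).tsum_eq_zero_add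
    have h2 := (tR_gen_summable w hw M).tsum_eq_zero_add
    have s1 := tR_gen_summable w hw (M + 1)
    have s2 := (summable_nat_add_iff 1).2 (tR_gen_summable w hw M)
    have h3 : ∑' n, tR (n + 1) (M + 1) * w ^ (n + 1) =
        ∑' n, tR (n + 1) M * w ^ (n + 1) + ta (M + 1) * w * ∑' n, tR n (M + 1) * w ^ n := by
      rw [← tsum_mul_left, ← s2.tsum_add (s1.mul_left _)]
      congr 1
      ext n
      rw [tR_succ]
      ring
    have hne : 1 - ta (M + 1) * w ≠ 0 := by
      have := (abs_lt.1 (abs_taw w hw (M + 1))).2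
      linarith
    rw [eq_mul_inv_iff_mul_eq₀ hne]
    simp only [tR, pow_zero, mul_one] at h1 h2
    simp only [tR] at h1 h2 h3 ⊢
    linarith

noncomputable def tS : ℕ → ℝ
  | 0 => 1
  | n + 1 => ∑' k, ta k * tR n k

lemma tS_summable (n : ℕ) : Summable fun k => ta k * tR n k :=
  Summable.of_nonneg_of_le (fun k => mul_nonneg (ta_nonneg k) (tR_nonneg _ _))
    (fun k => mul_le_mul_of_nonneg_left (tR_le_two n k) (ta_nonneg k)) (ta_summable.mul_right 2)

open Filter Topology in
lemma tR_tendsto (n : ℕ) : Tendsto (fun M => tR n M) atTop (𝓝 (tS n)) := by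
  cases n with
  | zero => simp [tR, tS]
  | succ n =>
    simp only [tR, tS]
    exact (tS_summable n).hasSum.tendsto_sum_nat.comp (tendsto_add_atTop_nat 1)

open Filter Topology in
lemma gen_tendsto (w : ℝ) (hw : |w| < 1) :
    Tendsto (fun M => ∑' n, tR n M * w ^ n) atTop (𝓝 (∑' n, tS n * w ^ n)) := by
  refine tendsto_tsum_of_dominated_convergence
    ((summable_geometric_of_lt_one (abs_nonneg w) hw).mul_left 2) ?_ ?_
  · intro n
    exact (tR_tendsto n).mul_const _
  · refine Eventually.of_forall fun M n => ?_
    rw [norm_mul, norm_pow, Real.norm_eq_abs, Real.norm_eq_abs, abs_of_nonneg (tR_nonneg _ _)]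
    exact mul_le_mul_of_nonneg_right (tR_le_two _ _) (by positivity)

lemma tS_gen_summable (w : ℝ) (hw : |w| < 1) : Summable fun n => tS n * w ^ n := by
  refine Summable.of_norm_bounded ((summable_geometric_of_lt_one (abs_nonneg w) hw).mul_left 2) ?_
  intro n
  have h0 : 0 ≤ tS n := ge_of_tendsto' (tR_tendsto n) fun M => tR_nonneg n M
  have h2 : tS n ≤ 2 := le_of_tendsto' (tR_tendsto n) fun M => tR_le_two n M
  rw [norm_mul, norm_pow, Real.norm_eq_abs, Real.norm_eq_abs, abs_of_nonneg h0]
  exact mul_le_mul_of_nonneg_right h2 (by positivity)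

lemma dbl_summable (w : ℝ) (hw : |w| < 1) :
    Summable fun p : ℕ × ℕ => (ta p.1 * w) ^ (p.2 + 1) / ((p.2 : ℝ) + 1) := by
  have h1 : Summable fun n : ℕ => |w| ^ (n + 1) :=
    (summable_nat_add_iff 1).2 (summable_geometric_of_lt_one (abs_nonneg w) hw)
  refine Summable.of_norm_bounded (ta_summable.mul_of_nonneg h1 ta_nonneg (fun n => by positivity)) ?_
  rintro ⟨k, n⟩
  simp only
  have hn : (0 : ℝ) < (n : ℝ) + 1 := by positivity
  rw [norm_div, norm_pow, norm_mul, Real.norm_eq_abs, Real.norm_eq_abs, Real.norm_eq_abs,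
    abs_of_pos hn, abs_of_nonneg (ta_nonneg k), mul_pow]
  refine (div_le_self (by have := ta_nonneg k; positivity) (by simp)).trans ?_
  refine mul_le_mul_of_nonneg_right ?_ (by positivity)
  rw [pow_succ]
  exact mul_le_of_le_one_left (ta_nonneg k) (pow_le_one₀ (ta_nonneg k) (ta_le_one k))

lemma inner_eq (w : ℝ) (n : ℕ) : ∑' k, (ta k * w) ^ (n + 1) / ((n : ℝ) + 1)
    = 1 / (n + 1 : ℝ) * tval (2 * (n + 1)) * w ^ (n + 1) := by
  rw [tval, ← tsum_mul_left, ← tsum_mul_right]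
  congr 1
  ext k
  rw [ta, pow_mul, mul_pow, div_pow, one_pow]
  ring

lemma exp_summable (w : ℝ) (hw : |w| < 1) :
    Summable (fun n : ℕ => 1 / (n + 1 : ℝ) * tval (2 * (n + 1)) * w ^ (n + 1)) := by
  have := (dbl_summable w hw).prod_symm.prod
  simp only [Prod.fst_swap, Prod.snd_swap] at this
  exact this.congr fun n => inner_eq w n

lemma log_hasSum (w : ℝ) (hw : |w| < 1) :
    HasSum (fun k => -Real.log (1 - ta k * w))
      (∑' n : ℕ, 1 / (n + 1 : ℝ) * tval (2 * (n + 1)) * w ^ (n + 1)) := by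
  have hd := dbl_summable w hw
  have h0 : ∀ k : ℕ, HasSum (fun n : ℕ => (ta k * w) ^ (n + 1) / ((n : ℝ) + 1))
      (-Real.log (1 - ta k * w)) :=
    fun k => Real.hasSum_pow_div_log_of_abs_lt_one (abs_taw w hw k)
  have h1 : HasSum (fun k => -Real.log (1 - ta k * w))
      (∑' p : ℕ × ℕ, (ta p.1 * w) ^ (p.2 + 1) / ((p.2 : ℝ) + 1)) :=
    HasSum.prod_fiberwise hd.hasSum h0
  have h2 : ∑' n : ℕ, 1 / (n + 1 : ℝ) * tval (2 * (n + 1)) * w ^ (n + 1) =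
      ∑' p : ℕ × ℕ, (ta p.1 * w) ^ (p.2 + 1) / ((p.2 : ℝ) + 1) := by
    have e1 := (Equiv.prodComm ℕ ℕ).tsum_eq
      (fun p : ℕ × ℕ => (ta p.1 * w) ^ (p.2 + 1) / ((p.2 : ℝ) + 1))
    have e2 := hd.prod_symm.tsum_prod
    refine Eq.trans ?_ (e2.symm.trans e1)
    exact tsum_congr fun n => (inner_eq w n).symm
  rw [h2]
  exact h1

open Filter Topology in
lemma gen_eq (w : ℝ) (hw : |w| < 1) : ∑' n, tS n * w ^ n =
    Real.exp (∑' n : ℕ, 1 / (n + 1 : ℝ) * tval (2 * (n + 1)) * w ^ (n + 1)) := by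
  refine tendsto_nhds_unique (gen_tendsto w hw) ?_
  have h := (Real.continuous_exp.tendsto _).comp
    ((log_hasSum w hw).tendsto_sum_nat.comp (tendsto_add_atTop_nat 1))
  refine h.congr fun M => ?_
  rw [tR_gen w hw]
  simp only [Function.comp, Real.exp_sum]
  refine Finset.prod_congr rfl fun k _ => ?_
  have := (abs_lt.1 (abs_taw w hw k)).2
  rw [Real.exp_neg, Real.exp_log (by linarith)]

noncomputable def tF (n : ℕ) (M : ℕ) (m : Fin n → ℕ) : ℝ :=
  if (∀ i j : Fin n, i < j → m j ≤ m i) ∧ (∀ i, m i ≤ M) then ∏ i, ta (m i) else 0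

lemma tF_nonneg (n M : ℕ) (m : Fin n → ℕ) : 0 ≤ tF n M m := by
  unfold tF
  split_ifs
  · exact Finset.prod_nonneg fun i _ => ta_nonneg _
  · exact le_rfl

lemma step_hasSum (n : ℕ) (c r : ℕ → ℝ) (hc : ∀ k, 0 ≤ c k) (s : ℝ)
    (h : ∀ k, HasSum (tF n k) (r k)) (hs : HasSum (fun k => c k * r k) s) :
    HasSum (fun m : Fin (n + 1) → ℕ => c (m 0) * tF n (m 0) (Fin.tail m)) s := by
  have key : HasSum (fun p : ℕ × (Fin n → ℕ) => c p.1 * tF n p.1 p.2) s := by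
    have hsum : Summable (fun p : ℕ × (Fin n → ℕ) => c p.1 * tF n p.1 p.2) := by
      rw [summable_prod_of_nonneg (fun p => mul_nonneg (hc _) (tF_nonneg _ _ _))]
      refine ⟨fun k => ((h k).mul_left (c k)).summable, ?_⟩
      refine hs.summable.congr fun k => ?_
      exact ((h k).mul_left (c k)).tsum_eq.symm
    have := hsum.hasSum.prod_fiberwise (fun k => (h k).mul_left (c k))
    rw [hs.unique this]
    exact hsum.hasSum
  have e := (Fin.consEquiv (fun _ : Fin (n + 1) => ℕ)).symm.hasSum_iff.2 key
  exact e

lemma cons_cond (n : ℕ) (m : Fin (n + 1) → ℕ) :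
    (∀ i j : Fin (n + 1), i < j → m j ≤ m i) ↔
    (∀ i j : Fin n, i < j → Fin.tail m j ≤ Fin.tail m i) ∧ ∀ i, Fin.tail m i ≤ m 0 := by
  constructor
  · intro h
    exact ⟨fun i j hij => h _ _ (Fin.succ_lt_succ_iff.2 hij), fun i => h _ _ (Fin.succ_pos i)⟩
  · rintro ⟨h1, h2⟩ i j hij
    induction j using Fin.cases with
    | zero => exact absurd hij (Fin.not_lt_zero i)
    | succ j =>
      induction i using Fin.cases with
      | zero => exact h2 j
      | succ i => exact h1 i j (Fin.succ_lt_succ_iff.1 hij)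

lemma tF_hasSum (n M : ℕ) : HasSum (tF n M) (tR n M) := by
  induction n generalizing M with
  | zero =>
    have : tF 0 M = fun _ => 1 := by
      ext m
      simp [tF]
    rw [this]
    simpa [tR] using hasSum_fintype (fun _ : Fin 0 → ℕ => (1 : ℝ))
  | succ n ih =>
    have h : HasSum (fun k => (if k ∈ Finset.range (M + 1) then ta k else 0) * tR n k)
        (∑ k ∈ Finset.range (M + 1), (if k ∈ Finset.range (M + 1) then ta k else 0) * tR n k) :=
      hasSum_sum_of_ne_finset_zero (fun b hb => by rw [if_neg hb, zero_mul])
    have h' : ∑ k ∈ Finset.range (M + 1), (if k ∈ Finset.range (M + 1) then ta k else 0) * tR n k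
        = tR (n + 1) M := by
      rw [tR]
      exact Finset.sum_congr rfl fun k hk => by rw [if_pos hk]
    rw [h'] at h
    have := step_hasSum n (fun k => if k ∈ Finset.range (M + 1) then ta k else 0) (fun k => tR n k)
      (fun k => by split_ifs; exacts [ta_nonneg k, le_rfl]) (tR (n + 1) M) ih h
    convert this using 1
    ext m
    have hall : (∀ i, m i ≤ M) ↔ m 0 ≤ M ∧ ∀ i, Fin.tail m i ≤ M := Fin.forall_fin_succ
    simp only [tF, cons_cond, Finset.mem_range, Nat.lt_succ_iff, Fin.prod_univ_succ, hall]
    by_cases h0 : m 0 ≤ M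
    · by_cases h1 : (∀ i j : Fin n, i < j → Fin.tail m j ≤ Fin.tail m i) ∧ ∀ i, Fin.tail m i ≤ m 0
      · rw [if_pos ⟨h1, h0, fun i => (h1.2 i).trans h0⟩, if_pos h1, if_pos h0]
        rfl
      · rw [if_neg (fun h => h1 h.1), if_neg h1, mul_zero]
    · rw [if_neg (fun h => h0 h.2.1), if_neg h0, zero_mul]

lemma tS_hasSum (n : ℕ) : HasSum (fun m : Fin (n + 1) → ℕ =>
    if (∀ i j : Fin (n + 1), i < j → m j ≤ m i) then ∏ i, ta (m i) else 0) (tS (n + 1)) := by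
  have := step_hasSum n ta (fun k => tR n k) ta_nonneg (tS (n + 1)) (tF_hasSum n)
    (tS_summable n).hasSum
  convert this using 1
  ext m
  simp only [tF, cons_cond, Fin.prod_univ_succ, mul_ite, mul_zero]
  rfl

lemma odd_hasSum (n : ℕ) : HasSum (fun m : Fin (n + 1) → ℕ =>
    if (∀ i, Odd (m i)) ∧ (∀ i j : Fin (n + 1), i < j → m j ≤ m i) then
      ∏ i, ((m i : ℝ) ^ 2)⁻¹ else 0) (tS (n + 1)) := by
  have hinj : Function.Injective (fun (m : Fin (n + 1) → ℕ) (i : Fin (n + 1)) => 2 * m i + 1) := by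
    intro a b hab
    ext i
    have := congrFun hab i
    simp only at this
    omega
  rw [← hinj.hasSum_iff]
  · convert tS_hasSum n using 1
    ext m
    have ho : ∀ i, Odd (2 * m i + 1) := fun i => ⟨m i, rfl⟩
    simp [Function.comp, ta]
  · intro m hm
    rw [if_neg]
    rintro ⟨h, -⟩
    choose f hf using h
    exact hm ⟨f, funext fun i => (hf i).symm⟩

lemma star_aux (n N : ℕ) (hN : N = n + 1) (K : Fin N → ℕ) (hK : ∀ i, K i = 2) :
    (∑' m : Fin N → ℕ, if (∀ i, Odd (m i)) ∧ (∀ i j : Fin N, i < j → m j ≤ m i) then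
      ∏ i, ((m i : ℝ) ^ K i)⁻¹ else 0) = tS (n + 1) := by
  subst hN
  simp only [hK]
  exact (odd_hasSum n).tsum_eq

lemma multTStar_eq (n : ℕ) : multTStar (List.replicate (n + 1) 2) = tS (n + 1) := by
  unfold multTStar
  exact star_aux n _ (by simp) (List.replicate (n + 1) 2).get (by intro i; simp)

/-- `1 + ∑_{n ≥ 1} t*({2}ⁿ) wⁿ = exp(∑_{n ≥ 1} (1/n) t(2n) wⁿ)` for `|w| < 1`. -/
theorem t_star_two_repeated_generating_function (w : ℝ) (hw : |w| < 1) :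
    Summable (fun n : ℕ => multTStar (List.replicate (n + 1) 2) * w ^ (n + 1)) ∧
    Summable (fun n : ℕ => 1 / (n + 1 : ℝ) * tval (2 * (n + 1)) * w ^ (n + 1)) ∧
    1 + ∑' n : ℕ, multTStar (List.replicate (n + 1) 2) * w ^ (n + 1)
      = Real.exp (∑' n : ℕ,
          1 / (n + 1 : ℝ) * tval (2 * (n + 1)) * w ^ (n + 1)) := by
  have hs := tS_gen_summable w hw
  refine ⟨?_, exp_summable w hw, ?_⟩
  · simp only [multTStar_eq]
    exact (summable_nat_add_iff 1).2 hs
  · rw [← gen_eq w hw, hs.tsum_eq_zero_add]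
    simp only [multTStar_eq, pow_zero, mul_one]
    rfl
end

section
/- There exists δ > 0 such that for all real u with |u| < δ: ∑_{k ≥ 2} (∑_{n=1}^{k−1} 2^{n−1} G_0(k,n)) u^{k−2} = ∑_{k ≥ 2} (∑_{n=1}^{k−1} (−1)^{k−n−1} 2^{n−1} G_0^*(k,n)) u^{k−2} = 2^{2u} · t(2) · exp( ∑_{n ≥ 2} (4(2^{n−1}−1)/(n(2^n−1))) t(n) u^n ), all series converging absolutely. -/
open scoped BigOperators

namespace WS

open Finset

/-- truncated sums over raw naturals -/
noncomputable def W (s : ℕ) : List ℕ → ℕ → ℝ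
  | [], _ => 1
  | k :: K, M => ∑ m ∈ range (M + s), if Odd m then ((m : ℝ) ^ k)⁻¹ * W s K m else 0

lemma W_nonneg (s : ℕ) (K : List ℕ) (M : ℕ) : 0 ≤ W s K M := by
  induction K generalizing M with
  | nil => simp [W]
  | cons k K ih =>
    rw [W]
    refine sum_nonneg fun m _ => ?_
    split_ifs
    · exact mul_nonneg (by positivity) (ih m)
    · exact le_rfl

open Classical in
noncomputable def TP (s : ℕ) (P : ℕ → Prop) (K : List ℕ) : ENNReal :=
  ∑' m : Fin K.length → ℕ,
    if ((∀ i, Odd (m i)) ∧ (∀ i, P (m i))) ∧ (∀ i j : Fin K.length, i < j → m j < m i + s) then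
      ENNReal.ofReal (∏ i, ((m i : ℝ) ^ K.get i)⁻¹)
    else 0

open Classical in
lemma TP_cons (s : ℕ) (hs : s ≤ 1) (P : ℕ → Prop) (hP : ∀ a b, a ≤ b → P b → P a) (k : ℕ)
    (K : List ℕ) :
    TP s P (k :: K) = ∑' m : ℕ, if Odd m ∧ P m then
      ENNReal.ofReal (((m : ℝ) ^ k)⁻¹) * TP s (fun a => a < m + s) K else 0 := by
  unfold TP
  refine ((Fin.consEquiv (fun _ : Fin (K.length + 1) => ℕ)).tsum_eq _).symm.trans ?_
  rw [ENNReal.tsum_prod']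
  refine tsum_congr fun m => ?_
  split_ifs with h
  · rw [← ENNReal.tsum_mul_left]
    refine tsum_congr fun q => ?_
    have e : (((∀ i : Fin (K.length + 1), Odd ((Fin.consEquiv (fun _ : Fin (K.length + 1) => ℕ)) (m, q) i)) ∧
      (∀ i : Fin (K.length + 1), P ((Fin.consEquiv (fun _ : Fin (K.length + 1) => ℕ)) (m, q) i))) ∧
      (∀ i j : Fin (K.length + 1), i < j → (Fin.consEquiv (fun _ : Fin (K.length + 1) => ℕ)) (m, q) j
        < (Fin.consEquiv (fun _ : Fin (K.length + 1) => ℕ)) (m, q) i + s)) ↔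
      ((∀ i, Odd (q i)) ∧ (∀ i, q i < m + s)) ∧ (∀ i j : Fin K.length, i < j → q j < q i + s) := by
      simp only [Fin.consEquiv, Equiv.coe_fn_mk, Fin.forall_fin_succ, Fin.cons_zero, Fin.cons_succ]
      constructor
      · rintro ⟨⟨h1, h2⟩, h3, h4⟩
        exact ⟨⟨h1.2, fun i => h3.2 i (Fin.succ_pos i)⟩, fun i j hij => (h4 i).2 j (Fin.succ_lt_succ_iff.2 hij)⟩
      · rintro ⟨⟨h1, h2⟩, h3⟩
        refine ⟨⟨⟨h.1, h1⟩, ⟨h.2, fun i => hP _ m (by have := h2 i; omega) h.2⟩⟩,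
          ⟨fun h => absurd h (lt_irrefl _), fun i _ => h2 i⟩, fun i => ⟨fun h => absurd h (by simp), fun j hij => h3 i j (Fin.succ_lt_succ_iff.1 hij)⟩⟩
    refine (if_congr e rfl rfl).trans ?_
    split_ifs with h'
    · rw [← ENNReal.ofReal_mul (by positivity)]
      congr 1
      exact Fin.prod_univ_succ (n := K.length) _
    · simp
  · rw [ENNReal.tsum_eq_zero]
    intro q
    refine if_neg ?_
    rintro ⟨⟨h1, h2⟩, -⟩
    exact h ⟨h1 (0 : Fin (K.length + 1)), h2 (0 : Fin (K.length + 1))⟩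

lemma TP_nil (s : ℕ) (P : ℕ → Prop) : TP s P [] = 1 := by
  unfold TP
  rw [tsum_eq_single (fun i => i.elim0)]
  · rw [if_pos]
    · simp
    · refine ⟨⟨fun i => i.elim0, fun i => i.elim0⟩, fun i => i.elim0⟩
  · intro b hb
    exact absurd (funext fun i => i.elim0) hb

lemma TP_eq_W (s : ℕ) (hs : s ≤ 1) (K : List ℕ) (M : ℕ) :
    TP s (fun a => a < M + s) K = ENNReal.ofReal (W s K M) := by
  induction K generalizing M with
  | nil => simp [TP_nil, W]
  | cons k K ih =>
    rw [TP_cons s hs _ (fun a b h h' => lt_of_le_of_lt h h'), W,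
      ENNReal.ofReal_sum_of_nonneg]
    · rw [tsum_eq_sum (s := range (M + s))]
      · refine sum_congr rfl fun m hm => ?_
        rw [mem_range] at hm
        by_cases ho : Odd m
        · rw [if_pos ⟨ho, hm⟩, if_pos ho, ih, ENNReal.ofReal_mul (by positivity)]
        · rw [if_neg (fun h => ho h.1), if_neg ho]; simp
      · intro m hm
        rw [mem_range] at hm
        rw [if_neg (fun h => hm h.2)]
    · intro m _
      split_ifs
      · exact mul_nonneg (by positivity) (W_nonneg ..)
      · exact le_rfl

noncomputable def x (i : ℕ) : ℝ := (2 * (i : ℝ) + 1)⁻¹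

lemma x_pos (i : ℕ) : 0 < x i := by unfold x; positivity
lemma x_le (i : ℕ) : x i ≤ 1 := by
  unfold x; apply inv_le_one_of_one_le₀; linarith [(Nat.cast_nonneg i : (0:ℝ) ≤ i)]

noncomputable def Z (s : ℕ) : List ℕ → ℕ → ℝ
  | [], _ => 1
  | k :: K, M => ∑ i ∈ range M, x i ^ k * Z s K (i + s)

lemma Z_nonneg (s : ℕ) (K : List ℕ) (M : ℕ) : 0 ≤ Z s K M := by
  induction K generalizing M with
  | nil => simp [Z]
  | cons k K ih =>
    rw [Z]
    exact sum_nonneg fun m _ => mul_nonneg (pow_nonneg (x_pos m).le _) (ih _)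

lemma sum_odd_even (f : ℕ → ℝ) (N : ℕ) :
    ∑ m ∈ range (2 * N), (if Odd m then f m else 0) = ∑ i ∈ range N, f (2 * i + 1) := by
  induction N with
  | zero => simp
  | succ N ih =>
    rw [sum_range_succ, ← ih, show 2 * (N + 1) = 2 * N + 1 + 1 by ring, sum_range_succ,
      sum_range_succ, if_neg (by simp), if_pos (by simp)]
    ring

lemma sum_odd_odd (f : ℕ → ℝ) (N : ℕ) :
    ∑ m ∈ range (2 * N + 1), (if Odd m then f m else 0) = ∑ i ∈ range N, f (2 * i + 1) := by
  rw [sum_range_succ, sum_odd_even, if_neg (by simp), add_zero]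

lemma W_eq_Z (s : ℕ) (hs : s ≤ 1) (K : List ℕ) (i : ℕ) : W s K (2 * i + 1) = Z s K (i + s) := by
  induction K generalizing i with
  | nil => simp [W, Z]
  | cons k K ih =>
    have key : W s (k :: K) (2 * i + 1) = ∑ i' ∈ range (i + s),
        (((2 * i' + 1 : ℕ) : ℝ) ^ k)⁻¹ * W s K (2 * i' + 1) := by
      rw [W]
      interval_cases s
      · exact sum_odd_odd (fun m => ((m : ℝ) ^ k)⁻¹ * W 0 K m) i
      · exact sum_odd_even (fun m => ((m : ℝ) ^ k)⁻¹ * W 1 K m) (i + 1)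
    rw [key, Z]
    refine sum_congr rfl fun j _ => ?_
    rw [ih, x, inv_pow]; push_cast; rfl

lemma TP_true (s : ℕ) (hs : s ≤ 1) (k : ℕ) (K : List ℕ) :
    TP s (fun _ => True) (k :: K) = ∑' i : ℕ, ENNReal.ofReal (x i ^ k * Z s K (i + s)) := by
  rw [TP_cons s hs _ (fun _ _ _ _ => trivial)]
  have hinj : Function.Injective (fun i : ℕ => 2 * i + 1) := fun a b h => by simpa using h
  rw [← hinj.tsum_eq]
  · refine tsum_congr fun i => ?_
    rw [if_pos (by simp), TP_eq_W s hs, W_eq_Z s hs, ← ENNReal.ofReal_mul (by positivity), x, inv_pow]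
    push_cast; rfl
  · intro m hm
    rw [Function.mem_support] at hm
    have : Odd m := by
      by_contra h
      exact hm (if_neg fun h' => h h'.1)
    obtain ⟨i, rfl⟩ := this
    exact ⟨i, rfl⟩

lemma multT_aux (s : ℕ) (hs : s ≤ 1) (k : ℕ) (K : List ℕ) :
    (∑' m : Fin (k :: K).length → ℕ,
    if (∀ i, Odd (m i)) ∧ (∀ i j : Fin (k :: K).length, i < j → m j < m i + s) then
      ∏ i, ((m i : ℝ) ^ (k :: K).get i)⁻¹
    else 0) = ∑' i : ℕ, x i ^ k * Z s K (i + s) := by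
  have h1 := congrArg ENNReal.toReal (TP_true s hs k K)
  rw [ENNReal.tsum_toReal_eq (by simp), TP, ENNReal.tsum_toReal_eq] at h1
  · convert h1 using 2
    · ext m
      simp only [implies_true, and_true]
      split_ifs
      · rw [ENNReal.toReal_ofReal (by positivity)]
      · simp
    · ext i
      rw [ENNReal.toReal_ofReal]
      exact mul_nonneg (pow_nonneg (x_pos i).le _) (Z_nonneg ..)
  · intro m
    split_ifs <;> simp

lemma multT_eq (k : ℕ) (K : List ℕ) : multT (k :: K) = ∑' i : ℕ, x i ^ k * Z 0 K (i + 0) := 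
  multT_aux 0 (by simp) k K

lemma multTStar_eq (k : ℕ) (K : List ℕ) : multTStar (k :: K) = ∑' i : ℕ, x i ^ k * Z 1 K (i + 1) := by
  rw [← multT_aux 1 (by simp) k K]
  simp only [multTStar, Nat.lt_succ_iff]

def comps : ℕ → Finset (List ℕ)
  | 0 => {[]}
  | r + 1 => (univ : Finset (Fin (r + 1))).biUnion fun k => (comps (r - k)).image (List.cons (k + 1))

lemma mem_comps (r : ℕ) (K : List ℕ) : K ∈ comps r ↔ (∀ i ∈ K, 1 ≤ i) ∧ K.sum = r := by
  induction r using Nat.strong_induction_on generalizing K with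
  | _ r ih =>
  cases r with
  | zero =>
    rw [comps, mem_singleton]
    constructor
    · rintro rfl; simp
    · rintro ⟨h1, h2⟩
      cases K with
      | nil => rfl
      | cons a K => 
        have := h1 a (by simp)
        simp at h2; omega
  | succ r =>
    rw [comps]
    simp only [mem_biUnion, mem_univ, true_and, mem_image]
    constructor
    · rintro ⟨k, K', hK', rfl⟩
      rw [ih _ (by omega)] at hK'
      have := k.2
      refine ⟨?_, ?_⟩
      · intro i hi
        rcases List.mem_cons.1 hi with rfl | hi
        · omega
        · exact hK'.1 i hi
      · rw [List.sum_cons, hK'.2]; omega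
    · rintro ⟨h1, h2⟩
      cases K with
      | nil => simp at h2
      | cons a K =>
        have := h1 a (by simp)
        rw [List.sum_cons] at h2
        refine ⟨⟨a - 1, by omega⟩, K, ?_, ?_⟩
        · rw [ih _ (by omega)]
          refine ⟨fun i hi => h1 i (List.mem_cons_of_mem _ hi), ?_⟩
          simp only; omega
        · simp only; congr 1; omega

lemma sum_comps_succ (r : ℕ) (φ : List ℕ → ℝ) :
    ∑ K ∈ comps (r + 1), φ K = ∑ k ∈ range (r + 1), ∑ K ∈ comps (r - k), φ ((k + 1) :: K) := by
  rw [comps, sum_biUnion]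
  · rw [sum_range]
    refine sum_congr rfl fun k _ => ?_
    rw [sum_image]
    intro a _ b _ h
    exact (List.cons.inj h).2
  · intro k _ k' _ hk
    rw [Function.onFun, Finset.disjoint_left]
    intro K h1 h2
    simp only [mem_image] at h1 h2
    obtain ⟨a, -, rfl⟩ := h1
    obtain ⟨b, -, h⟩ := h2
    have := (List.cons.inj h).1
    exact hk (Fin.ext (by omega))

lemma len_le (r : ℕ) (K : List ℕ) (h : K ∈ comps r) : K.length ≤ r := by
  obtain ⟨h1, rfl⟩ := (mem_comps _ _).1 h
  exact List.length_le_sum_of_one_le K h1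

lemma sum_G (j : ℕ) (g : ℕ → ℝ) (f : List ℕ → ℝ) :
    ∑ n ∈ range (j + 1), g n * (∑' K : List ℕ,
      if Admissible K ∧ K.sum = j + 2 ∧ K.length = n + 1 then f K else 0)
    = ∑ r ∈ range (j + 1), ∑ K ∈ comps r, g K.length * f ((j + 2 - r) :: K) := by
  set D : Finset (List ℕ) := (range (j + 1)).biUnion fun r => (comps r).image (List.cons (j + 2 - r)) with hD
  have hmem : ∀ K, Admissible K → K.sum = j + 2 → K ∈ D := by
    intro K h1 h2
    rw [hD]
    simp only [mem_biUnion, mem_image, mem_range]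
    cases K with
    | nil => simp at h2
    | cons a K =>
      have h3 : 2 ≤ a := h1.2
      rw [List.sum_cons] at h2
      exact ⟨K.sum, by omega, K, (mem_comps _ _).2 ⟨fun i hi => h1.1 i (List.mem_cons_of_mem _ hi), rfl⟩,
        by congr 1; omega⟩
  have h1 : ∀ n, (∑' K : List ℕ,
      if Admissible K ∧ K.sum = j + 2 ∧ K.length = n + 1 then f K else 0) = 
      ∑ K ∈ D, if Admissible K ∧ K.sum = j + 2 ∧ K.length = n + 1 then f K else 0 := by
    intro n
    rw [tsum_eq_sum]
    intro K hK
    exact if_neg fun h => hK (hmem K h.1 h.2.1)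
  simp_rw [h1, mul_sum]
  rw [sum_comm, hD, sum_biUnion]
  · refine sum_congr rfl fun r hr => ?_
    rw [sum_image]
    · refine sum_congr rfl fun K hK => ?_
      have hl := len_le r K hK
      obtain ⟨h2, h3⟩ := (mem_comps _ _).1 hK
      rw [mem_range] at hr
      rw [sum_eq_single K.length]
      · rw [if_pos]
        refine ⟨⟨?_, ?_⟩, ?_, ?_⟩
        · intro i hi
          rcases List.mem_cons.1 hi with rfl | hi
          · omega
          · exact h2 i hi
        · simp only [List.headI]; omega
        · rw [List.sum_cons]; omega
        · simp
      · intro n _ hn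
        rw [if_neg, mul_zero]
        rintro ⟨-, -, h⟩
        simp at h
        omega
      · intro h
        rw [mem_range] at h
        omega
    · intro a _ b _ h
      exact (List.cons.inj h).2
  · intro k hk k' hk' hkk
    simp only [coe_range, Set.mem_Iio] at hk hk'
    rw [Function.onFun, Finset.disjoint_left]
    intro K h1 h2
    simp only [mem_image] at h1 h2
    obtain ⟨a, -, rfl⟩ := h1
    obtain ⟨b, -, h⟩ := h2
    have := (List.cons.inj h).1
    exact hkk (by omega)

end WS

namespace WS

open Finset PowerSeries

/-- weighted composition sums -/
noncomputable def A (s : ℕ) (M r : ℕ) : ℝ :=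
  ∑ K ∈ comps r, ((-1 : ℝ) ^ s) ^ (r + K.length) * 2 ^ K.length * Z s K M

lemma A_zero (s M : ℕ) : A s M 0 = 1 := by
  simp [A, comps, Z]

lemma A_succ (s M r : ℕ) : A s M (r + 1) = ∑ i ∈ range M, ∑ k ∈ range (r + 1),
    2 * ((-1 : ℝ) ^ s) ^ k * x i ^ (k + 1) * A s (i + s) (r - k) := by
  rw [A, sum_comps_succ, sum_comm]
  refine sum_congr rfl fun k hk => ?_
  rw [mem_range] at hk
  simp only [A, mul_sum, Z]
  rw [sum_comm]
  refine sum_congr rfl fun i _ => sum_congr rfl fun K _ => ?_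
  have : r + 1 + ((k + 1) :: K).length = (r - k + K.length) + k + 2 := by
    simp; omega
  rw [this, pow_add _ _ 2, pow_add, List.length_cons, pow_succ (2 : ℝ)]
  have : ((-1 : ℝ) ^ s) ^ 2 = 1 := by rw [← pow_mul, mul_comm, pow_mul]; simp
  rw [this]
  ring

/-- geometric power series -/
noncomputable def geo (y : ℝ) : PowerSeries ℝ := PowerSeries.mk fun n => y ^ n

lemma geo_mul (y : ℝ) : (1 - C y * X) * geo y = 1 := by
  ext n
  cases n with
  | zero => simp [geo]
  | succ n =>
    rw [sub_mul, one_mul, map_sub, mul_assoc, coeff_C_mul, coeff_succ_X_mul]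
    simp [geo, coeff_one]; ring

noncomputable def p (s M : ℕ) : PowerSeries ℝ := PowerSeries.mk (A s M)

lemma p_succ (s M : ℕ) : p s (M + 1) = p s M + 2 * C (x M) * X * (geo ((-1) ^ s * x M) * p s (M + s)) := by
  ext n
  rw [show (2 : PowerSeries ℝ) * C (x M) = C (2 * x M) by rw [map_mul, map_ofNat], map_add, mul_assoc, coeff_C_mul]
  cases n with
  | zero => simp [p, A_zero]
  | succ n =>
    rw [coeff_succ_X_mul, coeff_mul, Finset.Nat.sum_antidiagonal_eq_sum_range_succ_mk]
    simp only [p, geo, coeff_mk]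
    rw [A_succ, A_succ, sum_range_succ, mul_sum]
    congr 1
    refine sum_congr rfl fun k _ => ?_
    rw [mul_pow]; ring

lemma p_zero (s : ℕ) : p s 0 = 1 := by
  ext n
  cases n with
  | zero => simp [p, A_zero]
  | succ n => simp [p, A_succ, coeff_one]

lemma p0_rec (M : ℕ) : (1 - C (x M) * X) * p 0 (M + 1) = (1 + C (x M) * X) * p 0 M := by
  have h := geo_mul (x M)
  rw [p_succ]
  simp only [pow_zero, one_mul, add_zero]
  linear_combination (2 * C (x M) * X * p 0 M) * h

lemma geo_mul' (y : ℝ) : (1 + C y * X) * geo (-y) = 1 := by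
  have := geo_mul (-y)
  rwa [map_neg, neg_mul, sub_neg_eq_add] at this

lemma p1_rec (M : ℕ) : (1 - C (x M) * X) * p 1 (M + 1) = (1 + C (x M) * X) * p 1 M := by
  have h := geo_mul' (x M)
  have h2 := p_succ 1 M
  simp only [pow_one, neg_mul, one_mul] at h2
  linear_combination (2 * C (x M) * X * p 1 (M + 1)) * h + (1 + C (x M) * X) * h2

lemma p_eq (M : ℕ) : p 0 M = p 1 M := by
  induction M with
  | zero => rw [p_zero, p_zero]
  | succ M ih =>
    have h0 := p0_rec M
    rw [ih, ← p1_rec M] at h0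
    have h := geo_mul (x M)
    linear_combination geo (x M) * h0 + (p 1 (M + 1) - p 0 (M + 1)) * h

/-- coefficient series of the term with largest index `i` -/
noncomputable def q (i : ℕ) : PowerSeries ℝ := C (x i ^ 2) * (geo (x i) * p 0 i)

lemma q_eq (i : ℕ) : q i = C (x i ^ 2) * (geo (- x i) * p 1 (i + 1)) := by
  have h1 := geo_mul (x i)
  have h2 := geo_mul' (x i)
  have h3 := p1_rec i
  rw [q, p_eq]
  linear_combination (- C (x i ^ 2) * geo (x i) * geo (- x i)) * h3
    - C (x i ^ 2) * geo (x i) * p 1 i * h2 + C (x i ^ 2) * geo (- x i) * p 1 (i + 1) * h1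

lemma coeff_q0 (i j : ℕ) : coeff j (q i) = ∑ r ∈ range (j + 1), x i ^ (j + 2 - r) * A 0 (i + 0) r := by
  rw [q, coeff_C_mul, coeff_mul, ← Finset.Nat.sum_antidiagonal_swap,
    Finset.Nat.sum_antidiagonal_eq_sum_range_succ_mk, mul_sum]
  refine sum_congr rfl fun r hr => ?_
  rw [mem_range] at hr
  simp only [Prod.swap, p, geo, coeff_mk]
  rw [show j + 2 - r = 2 + (j - r) by omega, pow_add, add_zero]
  ring

lemma coeff_q1 (i j : ℕ) : coeff j (q i) =
    ∑ r ∈ range (j + 1), (-1) ^ (j - r) * x i ^ (j + 2 - r) * A 1 (i + 1) r := by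
  rw [q_eq, coeff_C_mul, coeff_mul, ← Finset.Nat.sum_antidiagonal_swap,
    Finset.Nat.sum_antidiagonal_eq_sum_range_succ_mk, mul_sum]
  refine sum_congr rfl fun r hr => ?_
  rw [mem_range] at hr
  simp only [Prod.swap, p, geo, coeff_mk]
  rw [show j + 2 - r = 2 + (j - r) by omega, pow_add, neg_pow]
  ring

lemma A0_nonneg (M r : ℕ) : 0 ≤ A 0 M r := by
  unfold A
  exact sum_nonneg fun K _ => mul_nonneg (by positivity) (Z_nonneg ..)

lemma coeff_q_nonneg (i j : ℕ) : 0 ≤ coeff j (q i) := by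
  rw [coeff_q0]
  exact sum_nonneg fun r _ => mul_nonneg (pow_nonneg (x_pos i).le _) (A0_nonneg ..)

/-- evaluation -/
def Ev (f : PowerSeries ℝ) (u v : ℝ) : Prop :=
  Summable (fun n => |coeff n f * u ^ n|) ∧ HasSum (fun n => coeff n f * u ^ n) v

lemma Ev.mul {f g : PowerSeries ℝ} {u v w : ℝ} (hf : Ev f u v) (hg : Ev g u w) :
    Ev (f * g) u (v * w) := by
  have e : ∀ n, coeff n (f * g) * u ^ n = ∑ kl ∈ antidiagonal n,
      (coeff kl.1 f * u ^ kl.1) * (coeff kl.2 g * u ^ kl.2) := by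
    intro n
    rw [coeff_mul, sum_mul]
    refine sum_congr rfl fun kl h => ?_
    rw [← mem_antidiagonal.1 h, pow_add]; ring
  have hs := summable_norm_sum_mul_antidiagonal_of_summable_norm
    (f := fun n => coeff n f * u ^ n) (g := fun n => coeff n g * u ^ n)
    (by simpa only [Real.norm_eq_abs] using hf.1) (by simpa only [Real.norm_eq_abs] using hg.1)
  have ht := tsum_mul_tsum_eq_tsum_sum_antidiagonal_of_summable_norm
    (f := fun n => coeff n f * u ^ n) (g := fun n => coeff n g * u ^ n)
    (by simpa only [Real.norm_eq_abs] using hf.1) (by simpa only [Real.norm_eq_abs] using hg.1)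
  simp only [← e] at hs ht
  refine ⟨by simpa only [Real.norm_eq_abs] using hs, ?_⟩
  rw [hf.2.tsum_eq, hg.2.tsum_eq] at ht
  rw [ht]
  exact hs.of_norm.hasSum

lemma Ev.add {f g : PowerSeries ℝ} {u v w : ℝ} (hf : Ev f u v) (hg : Ev g u w) :
    Ev (f + g) u (v + w) := by
  refine ⟨?_, ?_⟩
  · refine Summable.of_nonneg_of_le (fun _ => abs_nonneg _) (fun n => ?_) (hf.1.add hg.1)
    rw [map_add, add_mul]
    exact abs_add_le _ _
  · have := hf.2.add hg.2
    simpa only [map_add, add_mul] using this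

lemma Ev.geo {y u : ℝ} (h : |y * u| < 1) : Ev (geo y) u (1 - y * u)⁻¹ := by
  refine ⟨?_, ?_⟩
  · simp only [WS.geo, coeff_mk, ← mul_pow, abs_pow]
    exact summable_geometric_of_lt_one (abs_nonneg _) h
  · simp only [WS.geo, coeff_mk, ← mul_pow]
    exact hasSum_geometric_of_abs_lt_one h

lemma Ev.C (c u : ℝ) : Ev (C c) u c := by
  have : ∀ n ≠ 0, coeff n (PowerSeries.C c) * u ^ n = 0 := by
    intro n hn; rw [coeff_C, if_neg hn, zero_mul]
  refine ⟨?_, ?_⟩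
  · refine summable_of_ne_finset_zero (s := {0}) fun n hn => ?_
    rw [this n (by simpa using hn), abs_zero]
  · convert hasSum_single 0 this using 1
    simp

lemma Ev.X (u : ℝ) : Ev X u u := by
  have : ∀ n ≠ 1, coeff n (PowerSeries.X : PowerSeries ℝ) * u ^ n = 0 := by
    intro n hn; rw [coeff_X, if_neg hn, zero_mul]
  refine ⟨?_, ?_⟩
  · refine summable_of_ne_finset_zero (s := {1}) fun n hn => ?_
    rw [this n (by simpa using hn), abs_zero]
  · convert hasSum_single 1 this using 1
    simp

/-- `R v j = ∏_{i<j} (2i+1-v)/(2i+1+v)` -/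
noncomputable def R (v : ℝ) (j : ℕ) : ℝ := ∏ i ∈ range j, (2 * (i : ℝ) + 1 - v) / (2 * i + 1 + v)

lemma Ev_p {u : ℝ} (hu : |u| < 1) (M : ℕ) : Ev (p 0 M) u (R (-u) M) := by
  induction M with
  | zero =>
    rw [p_zero, R, prod_range_zero, ← map_one PowerSeries.C]
    exact Ev.C 1 u
  | succ M ih =>
    have hx : |x M * u| < 1 := by
      rw [abs_mul, abs_of_pos (x_pos M)]
      calc x M * |u| ≤ 1 * |u| := by gcongr; exact x_le M
        _ < 1 := by simpa using hu
    have h1 : p 0 (M + 1) = (PowerSeries.C 1 + PowerSeries.C (2 * x M) * PowerSeries.X * WS.geo (x M)) * p 0 M := by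
      rw [p_succ, map_mul]; simp only [pow_zero, one_mul, add_zero, map_one]
      rw [show (PowerSeries.C (2 : ℝ)) = 2 from map_ofNat _ 2]
      ring
    have h2 := ((Ev.C 1 u).add (((Ev.C (2 * x M) u).mul (Ev.X u)).mul (Ev.geo hx))).mul ih
    rw [h1]
    convert h2 using 1
    rw [R, prod_range_succ, mul_comm, ← R]
    congr 1
    have hM : (0 : ℝ) ≤ M := Nat.cast_nonneg M
    have := (abs_lt.1 hu).2
    have := (abs_lt.1 hx).2
    have h3 : 1 - x M * u ≠ 0 := by linarith
    have h4 : 2 * (M : ℝ) + 1 + -u ≠ 0 := by linarith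
    have h5 : 2 * (M : ℝ) + 1 ≠ 0 := by linarith
    have h6 : 1 - x M * u = (2 * (M : ℝ) + 1 + -u) / (2 * M + 1) := by
      rw [x]; field_simp; ring
    rw [h6, x]
    field_simp
    ring

noncomputable def F (v : ℝ) (j : ℕ) : ℝ := R v j / ((2 * (j : ℝ) + 1) * (2 * j + 1 + v))

lemma Ev_q {u : ℝ} (hu : |u| < 1) (i : ℕ) : Ev (q i) u (F (-u) i) := by
  have hx : |x i * u| < 1 := by
    rw [abs_mul, abs_of_pos (x_pos i)]
    calc x i * |u| ≤ 1 * |u| := by gcongr; exact x_le i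
      _ < 1 := by simpa using hu
  rw [q]
  convert (Ev.C (x i ^ 2) u).mul ((Ev.geo hx).mul (Ev_p hu i)) using 1
  have hM : (0 : ℝ) ≤ i := Nat.cast_nonneg i
  have := (abs_lt.1 hu).2
  have := (abs_lt.1 hx).2
  have h3 : 1 - x i * u ≠ 0 := by linarith
  have h4 : 2 * (i : ℝ) + 1 + -u ≠ 0 := by linarith
  have h5 : 2 * (i : ℝ) + 1 ≠ 0 := by linarith
  have h6 : 1 - x i * u = (2 * (i : ℝ) + 1 + -u) / (2 * i + 1) := by
    rw [x]; field_simp; ring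
  rw [h6, x, F]
  field_simp

end WS

namespace WS

open Finset Filter Topology

lemma den_pos {v : ℝ} (hv : -(1/4) ≤ v) (i : ℕ) : 0 < 2 * (i : ℝ) + 1 + v := by
  have : (0 : ℝ) ≤ i := Nat.cast_nonneg i
  linarith

lemma R_succ (v : ℝ) (j : ℕ) : R v (j + 1) = R v j * ((2 * (j : ℝ) + 1 - v) / (2 * j + 1 + v)) := by
  rw [R, prod_range_succ, ← R]

lemma R_zero (v : ℝ) : R v 0 = 1 := by simp [R]

lemma R_sq_le {v : ℝ} (hv : -(1/4) ≤ v) (j : ℕ) : R v j ^ 2 ≤ 2 * j + 1 := by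
  induction j with
  | zero => simp [R_zero]
  | succ j ih =>
    have h0 := den_pos hv j
    have hj : (0 : ℝ) ≤ j := Nat.cast_nonneg j
    rw [R_succ, mul_pow, div_pow]
    calc R v j ^ 2 * ((2 * (j : ℝ) + 1 - v) ^ 2 / (2 * j + 1 + v) ^ 2)
        ≤ (2 * j + 1) * ((2 * (j : ℝ) + 1 - v) ^ 2 / (2 * j + 1 + v) ^ 2) := by gcongr
      _ ≤ 2 * ((j + 1 : ℕ) : ℝ) + 1 := by
        rw [← mul_div_assoc, div_le_iff₀ (by positivity)]
        push_cast
        set y : ℝ := 2 * (j : ℝ) + 1 with hy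
        have hy1 : 1 ≤ y := by linarith
        have : 2 * ((j : ℝ) + 1) + 1 = y + 2 := by rw [hy]; ring
        rw [this]
        have h1 : 0 ≤ (v + 1/4) * y ^ 2 := mul_nonneg (by linarith) (by positivity)
        have h2 : 0 ≤ (v + 1/4) * y := mul_nonneg (by linarith) (by positivity)
        have h3 : y ≤ y ^ 2 := by nlinarith
        nlinarith [sq_nonneg v]

lemma R_abs_le {v : ℝ} (hv : -(1/4) ≤ v) (j : ℕ) : |R v j| ≤ √(2 * j + 1) :=
  Real.abs_le_sqrt (R_sq_le hv j)

noncomputable def Bd (j : ℕ) : ℝ := √(2 * (j : ℝ) + 1) / (2 * (j : ℝ) + 1) ^ 2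

lemma Bd_summable : Summable Bd := by
  have h : Summable (fun n : ℕ => ((n : ℝ) ^ (-(3/2) : ℝ))) := by
    rw [Real.summable_nat_rpow]; norm_num
  have h' := (summable_nat_add_iff 1).2 h
  refine Summable.of_nonneg_of_le (fun j => by unfold Bd; positivity) (fun j => ?_) h'
  have hj : (0 : ℝ) ≤ j := Nat.cast_nonneg j
  have : Bd j = (2 * (j : ℝ) + 1) ^ (-(3/2) : ℝ) := by
    unfold Bd
    rw [Real.sqrt_eq_rpow, ← Real.rpow_natCast, ← Real.rpow_sub (by positivity)]
    norm_num
  rw [this]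
  apply Real.rpow_le_rpow_of_nonpos
  · positivity
  · push_cast; linarith
  · norm_num

lemma F_abs_le {v : ℝ} (hv : -(1/4) ≤ v) (j : ℕ) : |F v j| ≤ 4 / 3 * Bd j := by
  have hj : (0 : ℝ) ≤ j := Nat.cast_nonneg j
  have h0 := den_pos hv j
  have h := R_abs_le hv j
  rw [F, abs_div, abs_of_pos (show 0 < (2 * (j : ℝ) + 1) * (2 * j + 1 + v) by positivity), Bd,
    ← mul_div_assoc]
  rw [div_le_div_iff₀ (by positivity) (by positivity)]
  have hs := Real.sqrt_nonneg (2 * (j : ℝ) + 1)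
  calc |R v j| * (2 * (j : ℝ) + 1) ^ 2 ≤ √(2 * j + 1) * (2 * (j : ℝ) + 1) ^ 2 := by gcongr
    _ ≤ √(2 * j + 1) * (4 / 3 * ((2 * (j : ℝ) + 1) * (2 * j + 1 + v))) := by
      gcongr; nlinarith
    _ = _ := by ring

lemma F_summable {v : ℝ} (hv : -(1/4) ≤ v) : Summable (F v) :=
  Summable.of_norm_bounded (Bd_summable.mul_left (4/3)) (F_abs_le hv)

noncomputable def Φ (v : ℝ) : ℝ := ∑' j, F v j

lemma tele {f : ℕ → ℝ} {g : ℕ → ℝ} (hf : Summable f) (h : ∀ j, f j = g j - g (j + 1))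
    (hg : Tendsto g atTop (𝓝 0)) : ∑' j, f j = g 0 := by
  have h1 := hf.hasSum.tendsto_sum_nat
  have h2 : ∀ n, ∑ i ∈ range n, f i = g 0 - g n := by
    intro n
    rw [sum_congr rfl (fun i _ => h i), sum_range_sub']
  simp only [h2] at h1
  have h3 : Tendsto (fun n => g 0 - g n) atTop (𝓝 (g 0 - 0)) := hg.const_sub _
  rw [sub_zero] at h3
  exact tendsto_nhds_unique h1 h3

lemma inv_odd_tendsto : Tendsto (fun j : ℕ => (√(2 * (j : ℝ) + 1))⁻¹) atTop (𝓝 0) := by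
  apply Tendsto.inv_tendsto_atTop
  apply Real.tendsto_sqrt_atTop.comp
  apply tendsto_atTop_add_const_right
  exact tendsto_natCast_atTop_atTop.const_mul_atTop (by norm_num)

lemma R_div_tendsto {v : ℝ} (hv : -(1/4) ≤ v) :
    Tendsto (fun j : ℕ => R v j / (2 * (j : ℝ) + 1)) atTop (𝓝 0) := by
  apply squeeze_zero_norm _ inv_odd_tendsto
  intro j
  have : (0 : ℝ) < 2 * j + 1 := by positivity
  rw [Real.norm_eq_abs, abs_div, abs_of_pos this, div_le_iff₀ this]
  have h := Real.mul_self_sqrt this.le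
  have h2 := Real.sqrt_pos.2 this
  calc |R v j| ≤ √(2 * j + 1) := R_abs_le hv j
    _ = (√(2 * j + 1))⁻¹ * (√(2 * j + 1) * √(2 * j + 1)) := by field_simp
    _ = _ := by rw [h]

lemma R_shift {v : ℝ} (hv : -(1/4) ≤ v) (j : ℕ) :
    R (v + 2) j * ((2 * (j : ℝ) - 1 - v) * (2 * j + 1 + v)) = - R v j * (1 + v) ^ 2 := by
  induction j with
  | zero => simp [R_zero]; ring
  | succ j ih =>
    have h0 := den_pos hv j
    have h1 : 0 < 2 * (j : ℝ) + 1 + (v + 2) := by linarith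
    have h2 : 2 * ((j : ℝ) + 1) + 1 + v = 2 * (j : ℝ) + 1 + (v + 2) := by ring
    rw [R_succ, R_succ]
    push_cast
    rw [h2]
    field_simp
    linear_combination (2 * (j : ℝ) + 1 - v) * ih

lemma Φ_rec {v : ℝ} (hv : -(1/4) ≤ v) (hodd : ∀ j : ℕ, 2 * (j : ℝ) - 1 - v ≠ 0) :
    (v + 2) ^ 2 * Φ (v + 2) = (1 + v) ^ 2 * Φ v := by
  have hv2 : -(1/4) ≤ v + 2 := by linarith
  have hs : Summable (fun j => (1 + v) ^ 2 * F v j - (v + 2) ^ 2 * F (v + 2) j) :=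
    ((F_summable hv).mul_left _).sub ((F_summable hv2).mul_left _)
  have ht := tele (g := fun j : ℕ => (1 + v) * j * R v j / ((2 * (j : ℝ) - 1 - v) * (2 * j + 1 + v))) hs
    (by
      intro j
      have h0 := den_pos hv j
      have h1 : 0 < 2 * (j : ℝ) + 1 + (v + 2) := by linarith
      have h3 := hodd j
      have h4 := hodd (j + 1)
      have hp : (0 : ℝ) < 2 * j + 1 := by positivity
      have e : R (v + 2) j = - R v j * (1 + v) ^ 2 / ((2 * (j : ℝ) - 1 - v) * (2 * j + 1 + v)) := by
        rw [eq_div_iff (mul_ne_zero h3 h0.ne'), R_shift hv]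
      simp only [F]
      rw [e, R_succ]
      push_cast at h4 ⊢
      have e1 : 2 * ((j : ℝ) + 1) - 1 - v = 2 * j + 1 - v := by ring
      have e2 : 2 * ((j : ℝ) + 1) + 1 + v = 2 * (j : ℝ) + 1 + (v + 2) := by ring
      rw [e1] at h4 ⊢
      rw [e2]
      field_simp
      ring)
    (by
      have h1 : Tendsto (fun j : ℕ => (1 + v) * ((j : ℝ) / (2 * (j : ℝ) - 1 - v)) *
          ((2 * (j : ℝ) + 1) / (2 * j + 1 + v)) * (R v j / (2 * (j : ℝ) + 1))) atTop
          (𝓝 ((1 + v) * (1 / 2) * 1 * 0)) := by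
        have hinv : Tendsto (fun j : ℕ => ((j : ℝ))⁻¹) atTop (𝓝 0) :=
          tendsto_inv_atTop_nhds_zero_nat
        have ha : Tendsto (fun j : ℕ => (j : ℝ) / (2 * (j : ℝ) - 1 - v)) atTop (𝓝 (1 / 2)) := by
          have : Tendsto (fun j : ℕ => 1 / (2 - (1 + v) * ((j : ℝ))⁻¹)) atTop (𝓝 (1 / (2 - (1 + v) * 0))) :=
            tendsto_const_nhds.div (tendsto_const_nhds.sub (hinv.const_mul _)) (by norm_num)
          rw [mul_zero, sub_zero] at this
          refine this.congr' ?_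
          filter_upwards [eventually_gt_atTop 0] with j hj
          have hj' : (j : ℝ) ≠ 0 := by positivity
          have h3 := hodd j
          have : 2 - (1 + v) * ((j : ℝ))⁻¹ = (2 * j - 1 - v) / j := by field_simp; ring
          rw [this, one_div_div]
        have hb : Tendsto (fun j : ℕ => (2 * (j : ℝ) + 1) / (2 * j + 1 + v)) atTop (𝓝 1) := by
          have : Tendsto (fun j : ℕ => (2 + ((j : ℝ))⁻¹) / (2 + (1 + v) * ((j : ℝ))⁻¹)) atTop
              (𝓝 ((2 + 0) / (2 + (1 + v) * 0))) :=
            (tendsto_const_nhds.add hinv).div (tendsto_const_nhds.add (hinv.const_mul _)) (by norm_num)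
          rw [mul_zero, add_zero, div_self (by norm_num)] at this
          refine this.congr' ?_
          filter_upwards [eventually_gt_atTop 0] with j hj
          have hj' : (j : ℝ) ≠ 0 := by positivity
          have : 2 + (1 + v) * ((j : ℝ))⁻¹ = (2 * j + 1 + v) / j := by field_simp; ring
          have h' : 2 + ((j : ℝ))⁻¹ = (2 * j + 1) / j := by field_simp
          rw [this, h', div_div_div_cancel_right₀ hj']
        exact ((ha.const_mul _).mul hb).mul (R_div_tendsto hv)
      rw [mul_zero] at h1
      refine h1.congr fun j => ?_
      have h0 := den_pos hv j
      have h3 := hodd j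
      have hp : (0 : ℝ) < 2 * j + 1 := by positivity
      field_simp)
  rw [Summable.tsum_sub ((F_summable hv).mul_left _) ((F_summable hv2).mul_left _), tsum_mul_left,
    tsum_mul_left] at ht
  simp only [Φ]
  simp at ht
  linarith

lemma R_abs_le_one {v : ℝ} (hv : 0 ≤ v) (j : ℕ) : |R v j| ≤ 1 := by
  rw [R, abs_prod]
  refine prod_le_one (fun _ _ => abs_nonneg _) fun i _ => ?_
  have : (0 : ℝ) ≤ i := Nat.cast_nonneg i
  rw [abs_div, div_le_one (by positivity), abs_of_pos (show 0 < 2 * (i : ℝ) + 1 + v by positivity), abs_le]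
  constructor <;> linarith

noncomputable def d (j : ℕ) : ℝ := 2 / ((2 * (j : ℝ) + 1) * (2 * j + 3))

lemma d_pos (j : ℕ) : 0 < d j := by unfold d; positivity

lemma d_eq (j : ℕ) : d j = (2 * (j : ℝ) + 1)⁻¹ - (2 * ((j + 1 : ℕ) : ℝ) + 1)⁻¹ := by
  unfold d; push_cast
  have : 2 * ((j : ℝ) + 1) + 1 = 2 * j + 3 := by ring
  rw [this]; field_simp; ring

lemma odd_inv_tendsto : Tendsto (fun j : ℕ => (2 * (j : ℝ) + 1)⁻¹) atTop (𝓝 0) := by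
  apply Tendsto.inv_tendsto_atTop
  apply tendsto_atTop_add_const_right
  exact tendsto_natCast_atTop_atTop.const_mul_atTop (by norm_num)

lemma d_summable : Summable d := by
  refine Summable.of_nonneg_of_le (fun j => (d_pos j).le) (fun j => ?_) (Bd_summable.mul_left 2)
  unfold d Bd
  rw [← mul_div_assoc]
  have hj : (0 : ℝ) ≤ j := Nat.cast_nonneg j
  have : 1 ≤ √(2 * (j : ℝ) + 1) := by rw [Real.one_le_sqrt]; linarith
  apply div_le_div₀ (by positivity) (by linarith) (by positivity)
  nlinarith

lemma d_tsum : ∑' j, d j = 1 := by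
  rw [tele d_summable d_eq odd_inv_tendsto]; simp

lemma Φ_parts {v : ℝ} (hv : 0 ≤ v) : 2 * v * Φ v = 1 - ∑' j, R v (j + 1) * d j := by
  have hv' : -(1/4) ≤ v := by linarith
  have hs2 : Summable (fun j => R v (j + 1) * d j) := by
    refine Summable.of_norm_bounded d_summable fun j => ?_
    rw [norm_mul, Real.norm_eq_abs, Real.norm_eq_abs, abs_of_pos (d_pos j)]
    exact mul_le_of_le_one_left (d_pos j).le (R_abs_le_one hv _)
  have hs1 := (F_summable hv').mul_left (2 * v)
  have := tele (hs1.add hs2) (g := fun j : ℕ => R v j / (2 * (j : ℝ) + 1))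
    (by
      intro j
      rw [R_succ, F, d_eq]
      have h0 := den_pos hv' j
      push_cast
      field_simp
      ring) (R_div_tendsto hv')
  rw [hs1.tsum_add hs2, tsum_mul_left] at this
  simp [R_zero] at this
  rw [Φ]; linarith

noncomputable def L : ℝ := 1 - ∑' j, (-1) ^ (j + 1) * d j

lemma L_pos : 0 < L := by
  have hs : Summable (fun j => (-1) ^ (j + 1) * d j) := by
    refine Summable.of_norm_bounded d_summable fun j => ?_
    simp [abs_of_pos (d_pos j)]
  have h : ∑' j, (d j - (-1) ^ (j + 1) * d j) = 1 - ∑' j, (-1) ^ (j + 1) * d j := by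
    rw [d_summable.tsum_sub hs, d_tsum]
  rw [L, ← h]
  refine (d_summable.sub hs).tsum_pos (fun j => ?_) 0 ?_
  · rcases neg_one_pow_eq_or ℝ (j + 1) with h | h <;> rw [h] <;> linarith [d_pos j]
  · simp; linarith [d_pos 0]

lemma Φ_lim {w : ℕ → ℝ} (hw : Tendsto w atTop atTop) :
    Tendsto (fun N => 2 * w N * Φ (w N)) atTop (𝓝 L) := by
  have h1 : Tendsto (fun N => 1 - ∑' j, R (w N) (j + 1) * d j) atTop (𝓝 L) := by
    refine Tendsto.const_sub _ ?_
    refine tendsto_tsum_of_dominated_convergence d_summable ?_ ?_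
    · intro j
      refine Tendsto.mul_const _ ?_
      have : (-1 : ℝ) ^ (j + 1) = ∏ i ∈ range (j + 1), (-1 : ℝ) := by simp
      rw [this]
      refine tendsto_finsetProd _ fun i _ => ?_
      have h3 : Tendsto (fun v : ℝ => 2 * (2 * (i : ℝ) + 1) / (2 * i + 1 + v) - 1) atTop (𝓝 (0 - 1)) := by
        refine Tendsto.sub_const ?_ _
        exact tendsto_const_nhds.div_atTop (tendsto_atTop_add_const_left _ _ tendsto_id)
      rw [zero_sub] at h3
      refine (h3.comp hw).congr' ?_
      filter_upwards [hw.eventually_ge_atTop 0] with N hN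
      have : 0 < 2 * (i : ℝ) + 1 + w N := by positivity
      simp only [Function.comp]
      field_simp
      ring
    · filter_upwards [hw.eventually_ge_atTop 0] with N hN j
      rw [norm_mul, Real.norm_eq_abs, Real.norm_eq_abs, abs_of_pos (d_pos j)]
      exact mul_le_of_le_one_left (d_pos j).le (R_abs_le_one hN _)
  refine h1.congr' ?_
  filter_upwards [hw.eventually_ge_atTop 0] with N hN
  rw [Φ_parts hN]

noncomputable def PP (u : ℝ) (N : ℕ) : ℝ := ∏ i ∈ range N, ((2 * (i : ℝ) + 1 - u) / (2 * i + 2 - u)) ^ 2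

lemma Φ_iter {u : ℝ} (hu : |u| < 1/4) (N : ℕ) : Φ (2 * N - u) = PP u N * Φ (-u) := by
  have h := abs_lt.1 hu
  induction N with
  | zero => simp [PP]
  | succ N ih =>
    have hN : (0 : ℝ) ≤ N := Nat.cast_nonneg N
    have := Φ_rec (v := 2 * N - u) (by linarith) (by
      intro j hj
      have h1 : (((2 * j - 1 - 2 * N : ℤ)) : ℝ) = - u := by push_cast; linarith
      have h2 : |(((2 * j - 1 - 2 * N : ℤ)) : ℝ)| < 1 := by rw [h1, abs_neg]; linarith
      rw [← Int.cast_abs] at h2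
      have h3 : |(2 * j - 1 - 2 * N : ℤ)| < 1 := by exact_mod_cast h2
      rw [Int.abs_lt_one_iff] at h3
      omega)
    rw [ih] at this
    rw [PP, prod_range_succ, ← PP]
    push_cast
    have e : 2 * ((N : ℝ) + 1) - u = 2 * N - u + 2 := by ring
    rw [e]
    have h3 : 2 * (N : ℝ) + 2 - u ≠ 0 := by linarith
    rw [div_pow, mul_div_assoc', div_mul_eq_mul_div, eq_div_iff (pow_ne_zero 2 h3)]
    linear_combination this

lemma Φ_final {u q : ℝ} (hu : |u| < 1/4)
    (hQ : Tendsto (fun N => ∏ i ∈ range N, ((1 - u / (2 * (i : ℝ) + 1)) / (1 - u / (2 * (i : ℝ) + 2))) ^ 2) atTop (𝓝 q)) :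
    q * Φ (-u) = Φ 0 := by
  have hw1 : Tendsto (fun N : ℕ => 2 * (N : ℝ)) atTop atTop :=
    tendsto_natCast_atTop_atTop.const_mul_atTop (by norm_num)
  have hw2 : Tendsto (fun N : ℕ => 2 * (N : ℝ) - u) atTop atTop :=
    tendsto_atTop_add_const_right _ (-u) hw1
  have h1 := Φ_lim hw1
  have h2 := Φ_lim hw2
  have h3 : Tendsto (fun N : ℕ => (2 * (N : ℝ) - u) / (2 * N)) atTop (𝓝 1) := by
    have : Tendsto (fun N : ℕ => 1 - u / (2 * (N : ℝ))) atTop (𝓝 (1 - 0)) :=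
      (tendsto_const_nhds.div_atTop hw1).const_sub _
    rw [sub_zero] at this
    refine this.congr' ?_
    filter_upwards [eventually_gt_atTop 0] with j hj
    have hj' : (j : ℝ) ≠ 0 := by positivity
    field_simp
  have h4 := (((h1.mul hQ).mul h3).mul_const (Φ (-u)))
  have h5 := h2.mul_const (Φ 0)
  have h6 := tendsto_nhds_unique (h5.congr' ?_) h4
  · have := L_pos
    have h7 : L * (q * Φ (-u) - Φ 0) = 0 := by linear_combination -h6
    rcases mul_eq_zero.1 h7 with h | h
    · exact absurd h this.ne'
    · linarith
  · filter_upwards [eventually_gt_atTop 0] with N hN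
    have hN' : (N : ℝ) ≠ 0 := by positivity
    have e0 := Φ_iter (u := 0) (by norm_num) N
    rw [sub_zero, neg_zero] at e0
    rw [Φ_iter hu, e0]
    have e1 : PP u N = PP 0 N * ∏ i ∈ range N, ((1 - u / (2 * (i : ℝ) + 1)) / (1 - u / (2 * (i : ℝ) + 2))) ^ 2 := by
      rw [PP, PP, ← prod_mul_distrib]
      refine prod_congr rfl fun i _ => ?_
      rw [← mul_pow]
      congr 1
      have hi : (0 : ℝ) ≤ i := Nat.cast_nonneg i
      have := (abs_lt.1 hu).2
      have a1 : 2 * (i : ℝ) + 2 - u ≠ 0 := by linarith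
      have a2 : 2 * (i : ℝ) + 2 ≠ 0 := by positivity
      have a3 : 2 * (i : ℝ) + 1 ≠ 0 := by positivity
      have a4 : 1 - u / (2 * (i : ℝ) + 2) = (2 * (i : ℝ) + 2 - u) / (2 * i + 2) := by field_simp
      rw [a4, sub_zero, sub_zero]
      field_simp
    rw [e1]
    field_simp

end WS

namespace WS

open Finset Filter Topology

lemma alt_harmonic (N : ℕ) : ∑ i ∈ range N, ((2 * (i : ℝ) + 1)⁻¹ - (2 * (i : ℝ) + 2)⁻¹)
    = (harmonic (2 * N) : ℝ) - (harmonic N : ℝ) := by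
  induction N with
  | zero => simp
  | succ N ih =>
    rw [sum_range_succ, ih, show 2 * (N + 1) = 2 * N + 1 + 1 by ring, harmonic_succ, harmonic_succ,
      harmonic_succ]
    push_cast
    have : (N : ℝ) + 1 ≠ 0 := by positivity
    have h2 : 2 * (N : ℝ) + 1 ≠ 0 := by positivity
    have h3 : 2 * (N : ℝ) + 1 + 1 = 2 * (N + 1) := by ring
    have h4 : 2 * (N : ℝ) + 2 = 2 * (N + 1) := by ring
    rw [h3, h4]
    field_simp
    ring

lemma alt_tendsto : Tendsto (fun N => ∑ i ∈ range N, ((2 * (i : ℝ) + 1)⁻¹ - (2 * (i : ℝ) + 2)⁻¹))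
    atTop (𝓝 (Real.log 2)) := by
  have h := Real.tendsto_harmonic_sub_log
  have h2 : Tendsto (fun N : ℕ => 2 * N) atTop atTop := tendsto_id.const_mul_atTop' (by norm_num)
  have h3 := ((h.comp h2).sub h).add_const (Real.log 2)
  rw [sub_self, zero_add] at h3
  refine h3.congr' ?_
  filter_upwards [eventually_gt_atTop 0] with N hN
  rw [alt_harmonic]
  simp only [Function.comp]
  have : (N : ℝ) ≠ 0 := by positivity
  push_cast
  rw [Real.log_mul (by norm_num) this]
  ring

lemma log_series {t : ℝ} (ht : |t| < 1) :
    HasSum (fun n : ℕ => t ^ (n + 2) / ((n : ℝ) + 2)) (-Real.log (1 - t) - t) := by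
  have h := Real.hasSum_pow_div_log_of_abs_lt_one ht
  have h2 := (hasSum_nat_add_iff' 1).2 h
  simp only [sum_range_one] at h2
  have e1 : (fun n : ℕ => t ^ (n + 2) / ((n : ℝ) + 2)) =
      fun n : ℕ => t ^ (n + 1 + 1) / (((n + 1 : ℕ) : ℝ) + 1) := by
    funext n
    push_cast
    rw [show (n : ℝ) + 1 + 1 = n + 2 by ring]
  have e2 : -Real.log (1 - t) - t = -Real.log (1 - t) - t ^ (0 + 1) / (((0 : ℕ) : ℝ) + 1) := by simp
  rw [e1, e2]
  exact h2

/-- difference terms -/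
noncomputable def D (i n : ℕ) : ℝ := ((2 * (i : ℝ) + 1) ^ (n + 2))⁻¹ - ((2 * (i : ℝ) + 2) ^ (n + 2))⁻¹

lemma odd_summable (n : ℕ) : Summable (fun i : ℕ => ((2 * (i : ℝ) + 1) ^ (n + 2))⁻¹) := by
  have h : Summable (fun m : ℕ => ((m : ℝ) ^ (n + 2))⁻¹) :=
    Real.summable_nat_pow_inv.2 (by omega)
  have := h.comp_injective (i := fun i : ℕ => 2 * i + 1) (fun a b h => by simpa using h)
  refine this.congr fun i => ?_
  simp

lemma even_summable (n : ℕ) : Summable (fun i : ℕ => ((2 * (i : ℝ) + 2) ^ (n + 2))⁻¹) := by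
  have h : Summable (fun m : ℕ => ((m : ℝ) ^ (n + 2))⁻¹) :=
    Real.summable_nat_pow_inv.2 (by omega)
  have := h.comp_injective (i := fun i : ℕ => 2 * i + 2) (fun a b h => by simpa using h)
  refine this.congr fun i => ?_
  simp

lemma tval_eq (n : ℕ) : tval n = ∑' i : ℕ, ((2 * (i : ℝ) + 1) ^ n)⁻¹ := by
  simp [tval]

lemma tsum_D (n : ℕ) : ∑' i, D i n = 2 * ((2 : ℝ) ^ (n + 1) - 1) / ((2 : ℝ) ^ (n + 2) - 1) * tval (n + 2) := by
  have ho := odd_summable n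
  have he := even_summable n
  have hz : Summable (fun m : ℕ => (((m : ℝ) + 1) ^ (n + 2))⁻¹) := by
    have h : Summable (fun m : ℕ => ((m : ℝ) ^ (n + 2))⁻¹) :=
      Real.summable_nat_pow_inv.2 (by omega)
    have := (summable_nat_add_iff 1).2 h
    simpa using this
  have h1 : ∑' i : ℕ, ((2 * (i : ℝ) + 1) ^ (n + 2))⁻¹ + ∑' i : ℕ, ((2 * (i : ℝ) + 2) ^ (n + 2))⁻¹
      = ∑' m : ℕ, (((m : ℝ) + 1) ^ (n + 2))⁻¹ := by
    have := tsum_even_add_odd (f := fun m : ℕ => (((m : ℝ) + 1) ^ (n + 2))⁻¹)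
      (by simpa using ho) (by
        refine he.congr fun i => ?_
        push_cast
        rw [show 2 * (i : ℝ) + 1 + 1 = 2 * i + 2 by ring])
    rw [← this]
    push_cast
    congr 1
    refine tsum_congr fun i => ?_
    rw [show 2 * (i : ℝ) + 1 + 1 = 2 * i + 2 by ring]
  have h2 : ∑' i : ℕ, ((2 * (i : ℝ) + 2) ^ (n + 2))⁻¹ = ((2 : ℝ) ^ (n + 2))⁻¹ * ∑' m : ℕ, (((m : ℝ) + 1) ^ (n + 2))⁻¹ := by
    rw [← tsum_mul_left]
    refine tsum_congr fun i => ?_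
    rw [← mul_inv, ← mul_pow]; ring_nf
  have h3 : ∑' i, D i n = ∑' i : ℕ, ((2 * (i : ℝ) + 1) ^ (n + 2))⁻¹ - ∑' i : ℕ, ((2 * (i : ℝ) + 2) ^ (n + 2))⁻¹ :=
    ho.tsum_sub he
  rw [h3, tval_eq]
  rw [← h1] at h2
  have h4 : (1 : ℝ) < 2 ^ (n + 2) := one_lt_pow₀ (by norm_num) (by omega)
  have h5 : (2 : ℝ) ^ (n + 2) - 1 ≠ 0 := by linarith
  have h6 : (2 : ℝ) ^ (n + 2) ≠ 0 := by positivity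
  have h7 : 2 * (2 : ℝ) ^ (n + 1) = 2 ^ (n + 2) := by ring
  set a := ∑' i : ℕ, ((2 * (i : ℝ) + 1) ^ (n + 2))⁻¹
  set b := ∑' i : ℕ, ((2 * (i : ℝ) + 2) ^ (n + 2))⁻¹
  rw [inv_mul_eq_div, eq_div_iff h6] at h2
  rw [div_mul_eq_mul_div, eq_div_iff h5]
  linear_combination (-1 : ℝ) * h2 - a * h7

noncomputable def co (u : ℝ) (n : ℕ) : ℝ := 4 * ((2 : ℝ) ^ (n + 1) - 1) / ((n + 2) * ((2 : ℝ) ^ (n + 2) - 1))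
          * tval (n + 2) * u ^ (n + 2)

noncomputable def T (u : ℝ) (i n : ℕ) : ℝ := 2 / ((n : ℝ) + 2) * u ^ (n + 2) * D i n

lemma co_eq (u : ℝ) (n : ℕ) : co u n = ∑' i, T u i n := by
  simp only [T]
  rw [tsum_mul_left, tsum_D, co]
  have h4 : (1 : ℝ) < 2 ^ (n + 2) := one_lt_pow₀ (by norm_num) (by omega)
  have h5 : (2 : ℝ) ^ (n + 2) - 1 ≠ 0 := by linarith
  field_simp
  ring

lemma T_summable {u : ℝ} (hu : |u| < 1) : Summable (fun z : ℕ × ℕ => T u z.1 z.2) := by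
  have hs := (odd_summable 0).mul_of_nonneg (summable_geometric_of_lt_one (abs_nonneg u) hu)
    (fun i => by simp only [Pi.zero_apply]; positivity) (fun i => by simp only [Pi.zero_apply]; positivity)
  refine Summable.of_norm_bounded hs ?_
  rintro ⟨i, n⟩
  simp only [T, Real.norm_eq_abs, abs_mul, zero_add]
  have hi : (0 : ℝ) ≤ i := Nat.cast_nonneg i
  have h1 : |D i n| ≤ ((2 * (i : ℝ) + 1) ^ 2)⁻¹ := by
    have a1 : ((2 * (i : ℝ) + 2) ^ (n + 2))⁻¹ ≤ ((2 * (i : ℝ) + 1) ^ (n + 2))⁻¹ := by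
      gcongr; norm_num
    have a2 : 0 < ((2 * (i : ℝ) + 2) ^ (n + 2))⁻¹ := by positivity
    have a3 : ((2 * (i : ℝ) + 1) ^ (n + 2))⁻¹ ≤ ((2 * (i : ℝ) + 1) ^ 2)⁻¹ := by
      gcongr
      · linarith
      · omega
    rw [D, abs_of_nonneg (by linarith)]
    linarith
  have h2 : |2 / ((n : ℝ) + 2)| ≤ 1 := by
    rw [abs_of_pos (by positivity), div_le_one (by positivity)]
    linarith [(Nat.cast_nonneg n : (0 : ℝ) ≤ n)]
  have h3 : |u ^ (n + 2)| ≤ |u| ^ n := by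
    rw [abs_pow]
    exact pow_le_pow_of_le_one (abs_nonneg _) hu.le (by omega)
  calc |2 / ((n : ℝ) + 2)| * |u ^ (n + 2)| * |D i n| ≤ 1 * |u| ^ n * ((2 * (i : ℝ) + 1) ^ 2)⁻¹ := by gcongr
    _ = _ := by ring

lemma co_summable {u : ℝ} (hu : |u| < 1) : Summable (co u) := by
  have := (T_summable hu).prod_symm.prod
  refine this.congr fun n => ?_
  rw [co_eq]; rfl

lemma T_tsum {u : ℝ} (hu : |u| < 1) (i : ℕ) : ∑' n, T u i n =
    2 * ((-Real.log (1 - u / (2 * i + 1)) - u / (2 * i + 1)) - (-Real.log (1 - u / (2 * i + 2)) - u / (2 * i + 2))) := by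
  have hi : (0 : ℝ) ≤ i := Nat.cast_nonneg i
  have b : ∀ y : ℝ, 1 ≤ y → |u / y| < 1 := by
    intro y hy
    rw [abs_div, abs_of_pos (show 0 < y by linarith), div_lt_one (by linarith)]
    linarith
  have h1 := log_series (b (2 * i + 1) (by linarith))
  have h2 := log_series (b (2 * i + 2) (by linarith))
  rw [← ((h1.sub h2).mul_left 2).tsum_eq]
  refine tsum_congr fun n => ?_
  rw [T, D, div_pow, div_pow]
  field_simp

lemma Q_tendsto {u : ℝ} (hu : |u| < 1) :
    Tendsto (fun N => ∏ i ∈ range N, ((1 - u / (2 * (i : ℝ) + 1)) / (1 - u / (2 * (i : ℝ) + 2))) ^ 2) atTop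
      (𝓝 (Real.exp (- (∑' n, co u n) - 2 * u * Real.log 2))) := by
  have h1 : ∑' n, co u n = ∑' i, ∑' n, T u i n := by
    simp only [co_eq]
    exact (T_summable hu).tsum_comm
  have h2 := (T_summable hu).prod.hasSum.tendsto_sum_nat
  simp only at h2
  rw [← h1] at h2
  have h3 := (Real.continuous_exp.tendsto _).comp (h2.neg.sub (alt_tendsto.const_mul (2 * u)))
  refine h3.congr fun N => ?_
  simp only [Function.comp]
  rw [mul_sum, ← sum_neg_distrib, ← sum_sub_distrib, Real.exp_sum]
  refine prod_congr rfl fun i _ => ?_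
  rw [T_tsum hu]
  have hi : (0 : ℝ) ≤ i := Nat.cast_nonneg i
  have b : ∀ y : ℝ, 1 ≤ y → 0 < 1 - u / y := by
    intro y hy
    rw [sub_pos, div_lt_one (by linarith)]
    linarith [(abs_lt.1 hu).2]
  have b1 := b (2 * i + 1) (by linarith)
  have b2 := b (2 * i + 2) (by linarith)
  rw [← Real.exp_log (show 0 < ((1 - u / (2 * (i : ℝ) + 1)) / (1 - u / (2 * (i : ℝ) + 2))) ^ 2 by positivity)]
  congr 1
  rw [Real.log_pow, Real.log_div b1.ne' b2.ne']
  push_cast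
  ring

lemma Φ_zero : Φ 0 = tval 2 := by
  rw [Φ, tval_eq]
  refine tsum_congr fun j => ?_
  rw [F, R]
  have : ∀ i ∈ range j, (2 * (i : ℝ) + 1 - 0) / (2 * i + 1 + 0) = 1 := by
    intro i _
    rw [sub_zero, add_zero, div_self (by positivity)]
  rw [prod_congr rfl this]
  simp [sq]

lemma Φ_value {u : ℝ} (hu : |u| < 1/4) :
    Φ (-u) = (2 : ℝ) ^ (2 * u) * tval 2 * Real.exp (∑' n, co u n) := by
  have h := Φ_final hu (Q_tendsto (by linarith))
  rw [Φ_zero] at h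
  rw [← h, Real.rpow_def_of_pos (by norm_num)]
  have : Real.exp (Real.log 2 * (2 * u)) * (Real.exp (-(∑' n, co u n) - 2 * u * Real.log 2) * Φ (-u)) * Real.exp (∑' n, co u n)
    = Real.exp (Real.log 2 * (2 * u) + (-(∑' n, co u n) - 2 * u * Real.log 2) + ∑' n, co u n) * Φ (-u) := by
    rw [Real.exp_add, Real.exp_add]; ring
  rw [this]
  ring_nf
  simp

/-! final assembly -/

noncomputable def hh (M : ℕ) : ℝ := ∑ i ∈ range M, x i

lemma hh_nonneg (M : ℕ) : 0 ≤ hh M := sum_nonneg fun i _ => (x_pos i).le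

lemma hh_mono : Monotone hh := by
  intro a b h
  exact sum_le_sum_of_subset_of_nonneg (range_mono h) fun i _ _ => (x_pos i).le

lemma Z_le (s : ℕ) (hs : s ≤ 1) (K : List ℕ) (hK : ∀ k ∈ K, 1 ≤ k) (M : ℕ) :
    Z s K M ≤ hh M ^ K.length := by
  induction K generalizing M with
  | nil => simp [Z]
  | cons k K ih =>
    rw [Z, List.length_cons, pow_succ', hh, sum_mul, ← hh]
    refine sum_le_sum fun i hi => ?_
    rw [mem_range] at hi
    have h1 : x i ^ k ≤ x i := by
      have := pow_le_pow_of_le_one (x_pos i).le (x_le i) (hK k (by simp))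
      simpa using this
    have h2 : Z s K (i + s) ≤ hh M ^ K.length :=
      (ih (fun k hk => hK k (List.mem_cons_of_mem _ hk)) _).trans
        (pow_le_pow_left₀ (hh_nonneg _) (hh_mono (by omega)) _)
    exact mul_le_mul h1 h2 (Z_nonneg ..) (x_pos i).le

lemma exp_hh_le (M : ℕ) : Real.exp (hh M / 4) ≤ R (-(1/4)) M := by
  rw [hh, sum_div, Real.exp_sum, R]
  refine prod_le_prod (fun i _ => (Real.exp_pos _).le) fun i _ => ?_
  have hi : (0 : ℝ) ≤ i := Nat.cast_nonneg i
  have hx := x_pos i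
  have hx1 := x_le i
  have h1 := Real.one_sub_le_exp_neg (x i / 4)
  rw [Real.exp_neg] at h1
  have h2 : Real.exp (x i / 4) ≤ (1 - x i / 4)⁻¹ := by
    rw [le_inv_comm₀ (Real.exp_pos _) (by linarith)]
    exact h1
  refine h2.trans ?_
  have h3 : 1 - x i / 4 = (2 * (i : ℝ) + 1 + -(1/4)) / (2 * i + 1) := by
    rw [x]; field_simp; ring
  rw [h3, inv_div]
  have : 0 < 2 * (i : ℝ) + 1 + -(1/4) := by linarith
  gcongr
  linarith

lemma Zterm_summable (s : ℕ) (hs : s ≤ 1) (K : List ℕ) (hK : ∀ k ∈ K, 1 ≤ k) (k : ℕ) (hk : 2 ≤ k) :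
    Summable (fun i => x i ^ k * Z s K (i + s)) := by
  set n := K.length
  refine Summable.of_nonneg_of_le (fun i => mul_nonneg (pow_nonneg (x_pos i).le _) (Z_nonneg ..))
    (fun i => ?_) (Bd_summable.mul_left (4 ^ n * n.factorial * √3))
  have hi : (0 : ℝ) ≤ i := Nat.cast_nonneg i
  have h1 : x i ^ k ≤ x i ^ 2 := pow_le_pow_of_le_one (x_pos i).le (x_le i) hk
  have h2 := Z_le s hs K hK (i + s)
  have h3 := Real.pow_div_factorial_le_exp (x := hh (i + s) / 4) (by have := hh_nonneg (i + s); positivity) n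
  have h4 := (h3.trans (exp_hh_le _)).trans ((le_abs_self _).trans (R_abs_le le_rfl _))
  have h5 : √(2 * ((i + s : ℕ) : ℝ) + 1) ≤ √3 * √(2 * (i : ℝ) + 1) := by
    rw [← Real.sqrt_mul (by norm_num)]
    apply Real.sqrt_le_sqrt
    have : (s : ℝ) ≤ 1 := by exact_mod_cast hs
    push_cast; linarith
  have h6 := h4.trans h5
  rw [div_le_iff₀ (by positivity), div_pow, div_le_iff₀ (by positivity)] at h6
  calc x i ^ k * Z s K (i + s) ≤ x i ^ 2 * (√3 * √(2 * (i : ℝ) + 1) * n.factorial * 4 ^ n) :=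
        mul_le_mul h1 (h2.trans h6) (Z_nonneg ..) (by positivity)
    _ = _ := by rw [x, Bd, inv_pow]; field_simp

lemma G_eq (j : ℕ) : ∑ n ∈ range (j + 1), (2 : ℝ) ^ n * G0d (j + 2) (n + 1) =
    ∑' i, PowerSeries.coeff j (q i) := by
  simp only [G0d]
  rw [sum_G j (fun n => (2 : ℝ) ^ n) multT]
  have hs : ∀ r ∈ range (j + 1), ∀ K ∈ comps r,
      Summable (fun i => (2 : ℝ) ^ K.length * (x i ^ (j + 2 - r) * Z 0 K (i + 0))) := by
    intro r hr K hK
    rw [mem_range] at hr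
    exact (Zterm_summable 0 (by simp) K ((mem_comps _ _).1 hK).1 _ (by omega)).mul_left _
  simp only [multT_eq, ← tsum_mul_left]
  rw [sum_congr rfl (fun r hr => (Summable.tsum_finsetSum (hs r hr)).symm),
    ← Summable.tsum_finsetSum (fun r hr => summable_sum (hs r hr))]
  refine tsum_congr fun i => ?_
  rw [coeff_q0]
  refine sum_congr rfl fun r _ => ?_
  rw [A, mul_sum]
  refine sum_congr rfl fun K _ => ?_
  simp
  ring

lemma GStar_eq (j : ℕ) : ∑ n ∈ range (j + 1), (-1 : ℝ) ^ (j - n) * 2 ^ n * G0dStar (j + 2) (n + 1) =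
    ∑' i, PowerSeries.coeff j (q i) := by
  simp only [G0dStar]
  rw [sum_G j (fun n => (-1 : ℝ) ^ (j - n) * 2 ^ n) multTStar]
  have hs : ∀ r ∈ range (j + 1), ∀ K ∈ comps r,
      Summable (fun i => (-1 : ℝ) ^ (j - K.length) * 2 ^ K.length * (x i ^ (j + 2 - r) * Z 1 K (i + 1))) := by
    intro r hr K hK
    rw [mem_range] at hr
    exact (Zterm_summable 1 (by simp) K ((mem_comps _ _).1 hK).1 _ (by omega)).mul_left _
  simp only [multTStar_eq, ← tsum_mul_left]
  rw [sum_congr rfl (fun r hr => (Summable.tsum_finsetSum (hs r hr)).symm),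
    ← Summable.tsum_finsetSum (fun r hr => summable_sum (hs r hr))]
  refine tsum_congr fun i => ?_
  rw [coeff_q1]
  refine sum_congr rfl fun r hr => ?_
  rw [mem_range] at hr
  rw [A, mul_sum]
  refine sum_congr rfl fun K hK => ?_
  have hl := len_le r K hK
  have e : (-1 : ℝ) ^ (j - K.length) = (-1) ^ (j - r) * ((-1) ^ 1) ^ (r + K.length) := by
    rw [pow_one, ← pow_add, show j - r + (r + K.length) = (j - K.length) + 2 * K.length by omega,
      pow_add, pow_mul]
    simp
  rw [e]
  ring

lemma coeff_summable {u : ℝ} (hu : |u| < 1/4) :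
    Summable (fun z : ℕ × ℕ => PowerSeries.coeff z.2 (q z.1) * u ^ z.2) := by
  apply Summable.of_norm
  have hu' : |(|u|)| < 1 := by rw [abs_abs]; linarith
  have e : ∀ z : ℕ × ℕ, ‖PowerSeries.coeff z.2 (q z.1) * u ^ z.2‖ = PowerSeries.coeff z.2 (q z.1) * |u| ^ z.2 := by
    intro z
    rw [norm_mul, Real.norm_eq_abs, Real.norm_eq_abs, abs_of_nonneg (coeff_q_nonneg _ _), abs_pow]
  simp only [e]
  rw [summable_prod_of_nonneg (fun z => mul_nonneg (coeff_q_nonneg _ _) (by positivity))]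
  refine ⟨fun i => (Ev_q hu' i).2.summable, ?_⟩
  have : ∀ i, ∑' j, PowerSeries.coeff j (q i) * |u| ^ j = F (-|u|) i := fun i => (Ev_q hu' i).2.tsum_eq
  simp only [this]
  exact F_summable (by linarith)

lemma G_summable {u : ℝ} (hu : |u| < 1/4) :
    Summable (fun j => (∑' i, PowerSeries.coeff j (q i)) * u ^ j) := by
  have := (coeff_summable hu).prod_symm.prod
  refine this.congr fun j => ?_
  simp only [Prod.swap]
  rw [tsum_mul_right]

lemma G_tsum {u : ℝ} (hu : |u| < 1/4) :
    ∑' j, (∑' i, PowerSeries.coeff j (q i)) * u ^ j = Φ (-u) := by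
  simp only [← tsum_mul_right]
  rw [(coeff_summable hu).tsum_comm (f := fun i j => PowerSeries.coeff j (q i) * u ^ j), Φ]
  exact tsum_congr fun i => (Ev_q (by linarith) i).2.tsum_eq

end WS

/-- Weighted generating function identity (Proposition 2.5):
`∑_k (∑_n 2^{n-1} G₀(k,n)) u^{k-2} = ∑_k (∑_n (-1)^{k-n-1} 2^{n-1} G₀*(k,n)) u^{k-2}
 = 2^{2u} t(2) exp(∑_{n≥2} (4(2^{n-1}-1)/(n(2ⁿ-1))) t(n) uⁿ)`. -/
theorem weighted_sum_generating_function :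
    ∃ δ > (0 : ℝ), ∀ u : ℝ, |u| < δ →
      Summable (fun j : ℕ =>
        (∑ n ∈ Finset.range (j + 1), (2 : ℝ) ^ n * G0d (j + 2) (n + 1)) * u ^ j) ∧
      Summable (fun j : ℕ =>
        (∑ n ∈ Finset.range (j + 1),
          (-1 : ℝ) ^ (j - n) * 2 ^ n * G0dStar (j + 2) (n + 1)) * u ^ j) ∧
      Summable (fun n : ℕ =>
        4 * ((2 : ℝ) ^ (n + 1) - 1) / ((n + 2) * ((2 : ℝ) ^ (n + 2) - 1))
          * tval (n + 2) * u ^ (n + 2)) ∧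
      (∑' j : ℕ,
        (∑ n ∈ Finset.range (j + 1), (2 : ℝ) ^ n * G0d (j + 2) (n + 1)) * u ^ j)
        = (∑' j : ℕ,
            (∑ n ∈ Finset.range (j + 1),
              (-1 : ℝ) ^ (j - n) * 2 ^ n * G0dStar (j + 2) (n + 1)) * u ^ j) ∧
      (∑' j : ℕ,
        (∑ n ∈ Finset.range (j + 1), (2 : ℝ) ^ n * G0d (j + 2) (n + 1)) * u ^ j)
        = (2 : ℝ) ^ (2 * u) * tval 2 *
            Real.exp (∑' n : ℕ,
              4 * ((2 : ℝ) ^ (n + 1) - 1) / ((n + 2) * ((2 : ℝ) ^ (n + 2) - 1))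
                * tval (n + 2) * u ^ (n + 2)) := by
  refine ⟨1 / 4, by norm_num, fun u hu => ?_⟩
  simp only [WS.G_eq, WS.GStar_eq]
  refine ⟨WS.G_summable hu, WS.G_summable hu, WS.co_summable (by linarith), trivial, ?_⟩
  rw [WS.G_tsum hu, WS.Φ_value hu]
  rfl
end
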